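/- arXiv:1306.0767 — 7 statements merged into one kernel-verified Lean document; each statement's English description precedes it below -/
import Mathlib

section
/- Let n ≥ 9 be a natural number and let k be an integer with 1 ≤ k ≤ 2√n/3. Fix a k-involution s ∈ Sym_n and let trip(n,k) denote the proportion, among all k-involutions in Sym_n, of those k-involutions r with |supp r ∩ supp s| = 1. Then trip(n,k) ≥ min{ trip(n,1), trip(n, ⌊2√n/3⌋) }. -/
open scoped Classical

/-- `trip n k s` is the proportion, among all `k`-involutions of `Sym_n` (elements of order
two moving exactly `2k` points), of those `r` whose support meets the support of `s` in
exactly one point. -/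
noncomputable def trip (n k : ℕ) (s : Equiv.Perm (Fin n)) : ℝ :=
  ((Finset.univ.filter (fun r : Equiv.Perm (Fin n) =>
      orderOf r = 2 ∧ r.support.card = 2 * k ∧ (r.support ∩ s.support).card = 1)).card : ℝ) /
    ((Finset.univ.filter (fun r : Equiv.Perm (Fin n) =>
      orderOf r = 2 ∧ r.support.card = 2 * k)).card : ℝ)

lemma conj_order {n : ℕ} (σ r : Equiv.Perm (Fin n)) : orderOf (σ * r * σ⁻¹) = orderOf r := by
  have := MulEquiv.orderOf_eq (MulAut.conj σ) r
  simpa using this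

/-- the number of involutions with a given support -/
noncomputable def nInv {n : ℕ} (A : Finset (Fin n)) : ℕ :=
  (Finset.univ.filter (fun r : Equiv.Perm (Fin n) => orderOf r = 2 ∧ r.support = A)).card

lemma nInv_le {n : ℕ} (A B : Finset (Fin n)) (h : A.card = B.card) : nInv A ≤ nInv B := by
  have e : {x // x ∈ A} ≃ {x // x ∈ B} := Finset.equivOfCardEq h
  set σ : Equiv.Perm (Fin n) := e.extendSubtype with hσ
  have hmap : A.map σ.toEmbedding = B := by
    apply Finset.eq_of_subset_of_card_le
    · intro x hx
      obtain ⟨a, ha, rfl⟩ := Finset.mem_map.1 hx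
      exact e.extendSubtype_mem a ha
    · simp [h]
  unfold nInv
  apply Finset.card_le_card_of_injOn (fun r => σ * r * σ⁻¹)
  · intro r hr
    simp only [Finset.coe_filter, Finset.mem_univ, true_and, Set.mem_ofPred_eq] at hr ⊢
    refine ⟨by rw [conj_order, hr.1], ?_⟩
    rw [Equiv.Perm.support_conj, hr.2, hmap]
  · intro a _ b _ hab
    simpa using hab

lemma nInv_eq {n : ℕ} (A B : Finset (Fin n)) (h : A.card = B.card) : nInv A = nInv B :=
  le_antisymm (nInv_le A B h) (nInv_le B A h.symm)

lemma card_meet {n m : ℕ} (hm : 1 ≤ m) (S : Finset (Fin n)) (hS : S.card = m) :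
    (Finset.univ.filter (fun A : Finset (Fin n) => A.card = m ∧ (A ∩ S).card = 1)).card
      = m * (n - m).choose (m - 1) := by
  have h1 : (S ×ˢ (Finset.powersetCard (m - 1) Sᶜ)).card = m * (n - m).choose (m - 1) := by
    rw [Finset.card_product, Finset.card_powersetCard, Finset.card_compl, hS, Fintype.card_fin]
  rw [← h1]
  symm
  apply Finset.card_bij (fun p _ => insert p.1 p.2)
  · rintro ⟨x, T⟩ hp
    simp only [Finset.mem_product, Finset.mem_powersetCard] at hp
    obtain ⟨hx, hT, hc⟩ := hp
    have hxT : x ∉ T := fun h => by simpa [hx] using hT h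
    have hd : T ∩ S = ∅ := by
      ext y; simp only [Finset.mem_inter, Finset.notMem_empty, iff_false, not_and]
      intro hy; simpa using hT hy
    simp only [Finset.mem_filter, Finset.mem_univ, true_and]
    rw [Finset.card_insert_of_notMem hxT, Finset.insert_inter_of_mem hx, hd]
    refine ⟨by omega, by simp⟩
  · rintro ⟨x, T⟩ hp ⟨y, U⟩ hq heq
    simp only [Finset.mem_product, Finset.mem_powersetCard] at hp hq heq
    obtain ⟨hx, hT, -⟩ := hp
    obtain ⟨hy, hU, -⟩ := hq
    have key : ∀ z, z ∈ insert x T ↔ z ∈ insert y U := fun z => by rw [heq]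
    simp only [Finset.mem_insert] at key
    have hT' : ∀ z ∈ T, z ∉ S := fun z hz => by simpa using hT hz
    have hU' : ∀ z ∈ U, z ∉ S := fun z hz => by simpa using hU hz
    have hxy : x = y := by
      rcases (key x).1 (Or.inl rfl) with h | h
      · exact h
      · exact absurd hx (hU' x h)
    subst hxy
    have : T = U := by
      ext z
      have := key z
      have h1 := hT' z
      have h2 := hU' z
      by_cases hz : z = x
      · subst hz; tauto
      · tauto
    rw [this]
  · intro A hA
    simp only [Finset.mem_filter, Finset.mem_univ, true_and] at hA
    obtain ⟨hA, hA1⟩ := hA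
    obtain ⟨x, hx⟩ := Finset.card_eq_one.1 hA1
    have hxx : x ∈ A ∩ S := by rw [hx]; simp
    rw [Finset.mem_inter] at hxx
    refine ⟨(x, A.erase x), ?_, ?_⟩
    · simp only [Finset.mem_product, Finset.mem_powersetCard]
      refine ⟨hxx.2, ?_, by rw [Finset.card_erase_of_mem hxx.1, hA]⟩
      intro y hy
      rw [Finset.mem_erase] at hy
      rw [Finset.mem_compl]
      intro hyS
      have : y ∈ A ∩ S := Finset.mem_inter.2 ⟨hy.2, hyS⟩
      rw [hx, Finset.mem_singleton] at this
      exact hy.1 this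
    · exact Finset.insert_erase hxx.1

lemma trip_formula (n k : ℕ) (hk : 1 ≤ k) (s : Equiv.Perm (Fin n)) (hs : orderOf s = 2)
    (hc : s.support.card = 2 * k) :
    trip n k s = (2 * k : ℕ) * ((n - 2 * k).choose (2 * k - 1) : ℕ) / ((n.choose (2 * k) : ℕ) : ℝ) := by
  have hpos : 0 < nInv s.support := by
    apply Finset.card_pos.2
    exact ⟨s, by simp [hs]⟩
  have hnum : (Finset.univ.filter (fun r : Equiv.Perm (Fin n) =>
      orderOf r = 2 ∧ r.support.card = 2 * k ∧ (r.support ∩ s.support).card = 1)).card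
      = (2 * k * (n - 2 * k).choose (2 * k - 1)) * nInv s.support := by
    rw [← card_meet (by omega) s.support hc, ← smul_eq_mul (Finset.card _), ← Finset.sum_const,
      Finset.card_eq_sum_card_fiberwise (f := fun r => r.support)
        (t := Finset.univ.filter (fun A : Finset (Fin n) => A.card = 2 * k ∧ (A ∩ s.support).card = 1))]
    · apply Finset.sum_congr rfl
      intro A hA
      simp only [Finset.mem_filter, Finset.mem_univ, true_and] at hA
      rw [← nInv_eq A _ (hA.1.trans hc.symm), nInv, Finset.filter_filter]
      congr 1
      ext r
      simp only [Finset.mem_filter, Finset.mem_univ, true_and]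
      constructor
      · rintro ⟨⟨h, -⟩, h'⟩; exact ⟨h, h'⟩
      · rintro ⟨h, rfl⟩; exact ⟨⟨h, hA⟩, rfl⟩
    · intro r hr
      simp only [Finset.coe_filter, Finset.mem_univ, true_and, Set.mem_ofPred_eq] at hr ⊢
      exact hr.2
  have hden : (Finset.univ.filter (fun r : Equiv.Perm (Fin n) =>
      orderOf r = 2 ∧ r.support.card = 2 * k)).card
      = n.choose (2 * k) * nInv s.support := by
    have : (Finset.powersetCard (2 * k) (Finset.univ : Finset (Fin n))).card = n.choose (2 * k) := by
      rw [Finset.card_powersetCard, Finset.card_univ, Fintype.card_fin]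
    rw [← this, ← smul_eq_mul (Finset.card _), ← Finset.sum_const,
      Finset.card_eq_sum_card_fiberwise (f := fun r => r.support)
        (t := Finset.powersetCard (2 * k) (Finset.univ : Finset (Fin n)))]
    · apply Finset.sum_congr rfl
      intro A hA
      rw [Finset.mem_powersetCard] at hA
      rw [← nInv_eq A _ (hA.2.trans hc.symm), nInv, Finset.filter_filter]
      congr 1
      ext r
      simp only [Finset.mem_filter, Finset.mem_univ, true_and]
      constructor
      · rintro ⟨⟨h, -⟩, h'⟩; exact ⟨h, h'⟩
      · rintro ⟨h, rfl⟩; exact ⟨⟨h, hA.2⟩, rfl⟩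
    · intro r hr
      simp only [Finset.coe_filter, Finset.mem_univ, true_and, Set.mem_ofPred_eq] at hr
      simp [Finset.mem_powersetCard, hr.2]
  unfold trip
  rw [hnum, hden]
  have : (nInv s.support : ℝ) ≠ 0 := by positivity
  push_cast
  rw [mul_div_mul_right _ _ this]

/-- closed form -/
noncomputable def ff (n k : ℕ) : ℝ :=
  (2 * k : ℝ) ^ 2 * ((n - 2 * k).factorial : ℝ) ^ 2 /
    (((n + 1 - 4 * k).factorial : ℝ) * (n.factorial : ℝ))

lemma formula_ff (n k : ℕ) (hk : 1 ≤ k) (h4 : 4 * k ≤ n) :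
    (2 * k : ℕ) * ((n - 2 * k).choose (2 * k - 1) : ℕ) / ((n.choose (2 * k) : ℕ) : ℝ) = ff n k := by
  rw [Nat.cast_choose ℝ (show 2 * k - 1 ≤ n - 2 * k by omega),
    Nat.cast_choose ℝ (show 2 * k ≤ n by omega)]
  have e1 : n - 2 * k - (2 * k - 1) = n + 1 - 4 * k := by omega
  have e2 : ((2 * k).factorial : ℝ) = (2 * k : ℝ) * ((2 * k - 1).factorial : ℝ) := by
    rw [← Nat.mul_factorial_pred (show 2 * k ≠ 0 by omega)]; push_cast; ring
  rw [e1, e2, ff]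
  have hk0 : (k : ℝ) ≠ 0 := by positivity
  have p1 := Nat.factorial_ne_zero (2 * k - 1)
  have p2 := Nat.factorial_ne_zero (n - 2 * k)
  have p3 := Nat.factorial_ne_zero (n + 1 - 4 * k)
  have p4 := Nat.factorial_ne_zero n
  push_cast
  field_simp

/-- the ratio of consecutive values -/
noncomputable def rho (n k : ℕ) : ℝ :=
  ((k + 1 : ℝ) / k) ^ 2 * (((n + 1 - 4 * k : ℝ) / (n - 2 * k)) * ((n - 4 * k : ℝ) / (n - 2 * k)) *
    (((n - 4 * k - 1 : ℝ) / (n - 2 * k - 1)) * ((n - 4 * k - 2 : ℝ) / (n - 2 * k - 1))))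

lemma ff_succ (n k : ℕ) (hk : 1 ≤ k) (h4 : 4 * (k + 1) ≤ n) :
    ff n (k + 1) = ff n k * rho n k := by
  obtain ⟨a, rfl⟩ := Nat.exists_eq_add_of_le h4
  unfold ff rho
  have e1 : 4 * (k + 1) + a - 2 * (k + 1) = 2 * k + a + 2 := by omega
  have e2 : 4 * (k + 1) + a - 2 * k = 2 * k + a + 2 + 1 + 1 := by omega
  have e3 : 4 * (k + 1) + a + 1 - 4 * (k + 1) = a + 1 := by omega
  have e4 : 4 * (k + 1) + a + 1 - 4 * k = a + 1 + 1 + 1 + 1 + 1 := by omega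
  rw [e1, e2, e3, e4, Nat.factorial_succ (2 * k + a + 2 + 1), Nat.factorial_succ (2 * k + a + 2),
    Nat.factorial_succ (a + 1 + 1 + 1 + 1), Nat.factorial_succ (a + 1 + 1 + 1),
    Nat.factorial_succ (a + 1 + 1), Nat.factorial_succ (a + 1)]
  have p1 := Nat.factorial_pos (4 * (k + 1) + a)
  have p2 := Nat.factorial_pos (2 * k + a + 2)
  have p3 := Nat.factorial_pos (a + 1)
  generalize Nat.factorial (4 * (k + 1) + a) = P1 at *
  generalize Nat.factorial (2 * k + a + 2) = P2 at *
  generalize Nat.factorial (a + 1) = P3 at *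
  push_cast
  have q1 : (4 * (k + 1 : ℝ) + a - 2 * k) = 2 * k + a + 4 := by ring
  have q2 : (2 * k + a + 4 - 1 : ℝ) = 2 * k + a + 3 := by ring
  have q3 : (4 * (k + 1 : ℝ) + a + 1 - 4 * k) = a + 5 := by ring
  have q4 : (4 * (k + 1 : ℝ) + a - 4 * k) = a + 4 := by ring
  rw [q1, q2, q3, q4]
  have hk0 : (0 : ℝ) < k := by exact_mod_cast hk
  have p1' : (P1 : ℝ) ≠ 0 := by positivity
  have p2' : (P2 : ℝ) ≠ 0 := by positivity
  have p3' : (P3 : ℝ) ≠ 0 := by positivity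
  field_simp
  ring

lemma frac_le (c d x y : ℝ) (hxy : x ≤ y) (hc : 0 ≤ 2 * c - d) (hd : 0 < c - y) (hd' : d ≤ 2 * c)
    (hd0 : 0 ≤ d) :
    (d - 2 * y) / (c - y) ≤ (d - 2 * x) / (c - x) := by
  rw [div_le_div_iff₀ hd (by linarith)]
  nlinarith

lemma rho_anti (n i j : ℕ) (hi : 1 ≤ i) (hij : i ≤ j) (h4 : 4 * (j + 1) ≤ n) :
    rho n j ≤ rho n i := by
  have hi' : (1 : ℝ) ≤ i := by exact_mod_cast hi
  have hij' : (i : ℝ) ≤ j := by exact_mod_cast hij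
  have h4' : 4 * ((j : ℝ) + 1) ≤ n := by exact_mod_cast h4
  have g : ∀ c d : ℝ, c = n ∨ c = n - 1 → (d = n + 1 ∨ d = n ∨ d = n - 1 ∨ d = n - 2) → d ≤ 2 * c →
      (d - 4 * j) / (c - 2 * j) ≤ (d - 4 * i) / (c - 2 * i) := by
    intro c d hc hd hcd
    have := frac_le c d (2 * i) (2 * j) (by linarith) (by linarith)
      (by rcases hc with rfl | rfl <;> linarith) hcd
      (by rcases hd with rfl | rfl | rfl | rfl <;> linarith)
    convert this using 2 <;> ring
  have g1 := g n (n + 1) (by simp) (by simp) (by linarith)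
  have g2 := g n n (by simp) (by simp) (by linarith)
  have g3 := g (n - 1) (n - 1) (by simp) (by simp) (by linarith)
  have g4 := g (n - 1) (n - 2) (by simp) (by simp) (by linarith)
  have r3 : ∀ x : ℝ, (n - 4 * x - 1) / (n - 2 * x - 1) = (n - 1 - 4 * x) / (n - 1 - 2 * x) := by
    intro x; congr 1 <;> ring
  have r4 : ∀ x : ℝ, (n - 4 * x - 2) / (n - 2 * x - 1) = (n - 2 - 4 * x) / (n - 1 - 2 * x) := by
    intro x; congr 1 <;> ring
  have hr : ((j + 1 : ℝ) / j) ≤ (i + 1 : ℝ) / i := by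
    rw [div_le_div_iff₀ (by linarith) (by linarith)]
    nlinarith
  have n1 : (0 : ℝ) ≤ (n + 1 - 4 * j) / (n - 2 * j) := div_nonneg (by linarith) (by linarith)
  have n2 : (0 : ℝ) ≤ (n - 4 * j) / (n - 2 * j) := div_nonneg (by linarith) (by linarith)
  have n3 : (0 : ℝ) ≤ (n - 1 - 4 * j) / (n - 1 - 2 * j) := div_nonneg (by linarith) (by linarith)
  have n4 : (0 : ℝ) ≤ (n - 2 - 4 * j) / (n - 1 - 2 * j) := div_nonneg (by linarith) (by linarith)
  unfold rho
  simp only [r3, r4]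
  have m1 := n1.trans g1
  have m2 := n2.trans g2
  have m3 := n3.trans g3
  have m4 := n4.trans g4
  have a1 := mul_le_mul g1 g2 n2 m1
  have a2 := mul_le_mul g3 g4 n4 m3
  have a3 := mul_le_mul a1 a2 (mul_nonneg n3 n4) (mul_nonneg m1 m2)
  have hr0 : (0 : ℝ) ≤ (j + 1 : ℝ) / j := by positivity
  exact mul_le_mul (pow_le_pow_left₀ hr0 hr 2) a3
    (mul_nonneg (mul_nonneg n1 n2) (mul_nonneg n3 n4)) (by positivity)

lemma ff_nonneg (n k : ℕ) : 0 ≤ ff n k := by unfold ff; positivity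

lemma ff_min (n k K : ℕ) (hk : 1 ≤ k) (hkK : k ≤ K) (hK : 4 * K ≤ n) :
    min (ff n 1) (ff n K) ≤ ff n k := by
  by_cases h : ∃ j, 1 ≤ j ∧ j < k ∧ rho n j < 1
  · obtain ⟨j, hj1, hjk, hj⟩ := h
    apply min_le_of_right_le
    obtain ⟨t, rfl⟩ := Nat.exists_eq_add_of_le hkK
    clear hkK
    induction t with
    | zero => simp
    | succ t ih =>
      refine le_trans ?_ (ih (by omega))
      rw [← add_assoc, ff_succ n (k + t) (by omega) (by omega)]
      have := rho_anti n j (k + t) hj1 (by omega) (by omega)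
      exact mul_le_of_le_one_right (ff_nonneg _ _) (by linarith)
  · push Not at h
    apply min_le_of_left_le
    obtain ⟨t, rfl⟩ := Nat.exists_eq_add_of_le hk
    clear hk
    induction t with
    | zero => simp
    | succ t ih =>
      refine le_trans (ih (by omega) (fun j h1 h2 => h j h1 (by omega))) ?_
      rw [← add_assoc, ff_succ n (1 + t) (by omega) (by omega)]
      exact le_mul_of_one_le_right (ff_nonneg _ _) (h _ (by omega) (by omega))

/-- For `n ≥ 9` and `1 ≤ k ≤ 2√n/3`,
`trip(n,k) ≥ min(trip(n,1), trip(n,⌊2√n/3⌋))`. -/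
theorem trip_ge_min (n : ℕ) (hn : 9 ≤ n) (k : ℕ) (hk1 : 1 ≤ k)
    (hk2 : (k : ℝ) ≤ 2 * Real.sqrt n / 3)
    (s s₁ s₂ : Equiv.Perm (Fin n))
    (hs : orderOf s = 2) (hssupp : s.support.card = 2 * k)
    (hs₁ : orderOf s₁ = 2) (hs₁supp : s₁.support.card = 2 * 1)
    (hs₂ : orderOf s₂ = 2) (hs₂supp : s₂.support.card = 2 * ⌊2 * Real.sqrt n / 3⌋₊) :
    min (trip n 1 s₁) (trip n ⌊2 * Real.sqrt n / 3⌋₊ s₂) ≤ trip n k s := by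
  have hK : k ≤ ⌊2 * Real.sqrt n / 3⌋₊ := Nat.le_floor hk2
  have hn' : (9 : ℝ) ≤ n := by exact_mod_cast hn
  have hfl : ((⌊2 * Real.sqrt n / 3⌋₊ : ℕ) : ℝ) ≤ 2 * Real.sqrt n / 3 :=
    Nat.floor_le (by positivity)
  generalize ⌊2 * Real.sqrt n / 3⌋₊ = K at *
  have h4 : 4 * K ≤ n := by
    have h3 : (3 : ℝ) ≤ Real.sqrt n := Real.le_sqrt_of_sq_le (by linarith)
    have hsq : Real.sqrt n * Real.sqrt n = n := Real.mul_self_sqrt (by linarith)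
    have : (4 * K : ℝ) ≤ n := by nlinarith
    exact_mod_cast this
  rw [trip_formula n 1 le_rfl s₁ hs₁ hs₁supp, trip_formula n K (by omega) s₂ hs₂ hs₂supp,
    trip_formula n k hk1 s hs hssupp, formula_ff n 1 le_rfl (by omega),
    formula_ff n K (by omega) h4, formula_ff n k hk1 (by omega)]
  exact ff_min n k K hk1 hK h4
end

section
/- Let n and k be natural numbers with n ≥ 4k − 1 and k ≥ 1, and let s ∈ Sym_n be a k-involution. Then the number of k-involutions r ∈ Sym_n with |supp r ∩ supp s| = 1 equals 2k·(n−2k)·inv(n−2k−1, k−1), where inv(m,j) := m!/(2^j · j! · (m−2j)!). Moreover, the total number of k-involutions in Sym_n equals inv(n,k) = n!/(2^k · k! · (n−2k)!). -/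
open scoped Classical

/-- `invCount m j = m!/(2^j · j! · (m−2j)!)`, the number of `j`-involutions in `Sym_m`
(for `m ≥ 2j` the division is exact). -/
def invCount (m j : ℕ) : ℕ :=
  m.factorial / (2 ^ j * j.factorial * (m - 2 * j).factorial)

open Equiv Equiv.Perm in
theorem cycleType_iff_aux {α : Type*} [Fintype α] [DecidableEq α] (r : Equiv.Perm α) (j : ℕ) :
    r.cycleType = Multiset.replicate j 2 ↔ (r * r = 1 ∧ r.support.card = 2 * j) := by
  constructor
  · intro h
    constructor
    · rw [← pow_two, ← orderOf_dvd_iff_pow_eq_one, ← lcm_cycleType, h]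
      apply Multiset.lcm_dvd.2
      intro b hb
      rw [Multiset.eq_of_mem_replicate hb]
    · rw [← sum_cycleType, h]; simp [mul_comm]
  · rintro ⟨h1, h2⟩
    have h3 : r.cycleType = Multiset.replicate (r.cycleType.card) 2 := by
      apply Multiset.eq_replicate_card.2
      intro b hb
      have hd := dvd_of_mem_cycleType hb
      have h4 : orderOf r ∣ 2 := orderOf_dvd_of_pow_eq_one (by rw [pow_two, h1])
      have h5 := two_le_of_mem_cycleType hb
      have := Nat.le_of_dvd (by norm_num) (hd.trans h4)
      omega
    have h4 := sum_cycleType r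
    rw [h3, h2] at h4
    simp at h4
    rw [h3]; congr 1; omega

open Equiv Equiv.Perm in
theorem card_inv_aux (α : Type*) [Fintype α] [DecidableEq α] (j : ℕ)
    (hj : 2 * j ≤ Fintype.card α) :
    (Finset.univ.filter (fun r : Equiv.Perm α => r.cycleType = Multiset.replicate j 2)).card
      = invCount (Fintype.card α) j := by
  have h := card_of_cycleType α (Multiset.replicate j 2)
  rw [if_pos] at h
  · rw [invCount]
    convert h using 2
    rcases Nat.eq_zero_or_pos j with rfl | hj0
    · simp
    · simp [hj0.ne']
      ring_nf
  · refine ⟨by simpa [mul_comm] using hj, ?_⟩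
    intro a ha
    rw [Multiset.eq_of_mem_replicate ha]

open Equiv Equiv.Perm in
theorem card_inv_sub_aux {α : Type*} [Fintype α] [DecidableEq α] (T : Finset α) (j : ℕ)
    (hj : 2 * j ≤ T.card) :
    (Finset.univ.filter (fun r : Equiv.Perm α =>
      r.cycleType = Multiset.replicate j 2 ∧ r.support ⊆ T)).card = invCount T.card j := by
  have h := card_inv_aux {x // x ∈ T} j (by simpa using hj)
  rw [Fintype.card_coe] at h
  rw [← h]
  symm
  apply Finset.card_bij (fun (t : Equiv.Perm {x // x ∈ T}) _ => ofSubtype t)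
  · intro t ht
    simp only [Finset.mem_filter, Finset.mem_univ, true_and] at ht ⊢
    refine ⟨by rw [cycleType_ofSubtype, ht], ?_⟩
    intro x hx
    by_contra hxT
    exact (mem_support.1 hx) (ofSubtype_apply_of_not_mem t hxT)
  · intro a _ b _ hab
    exact ofSubtype_injective hab
  · intro r hr
    simp only [Finset.mem_filter, Finset.mem_univ, true_and] at hr
    have h1 : ∀ x, r x ≠ x → x ∈ T := fun x hx => hr.2 (mem_support.2 hx)
    have h2 : ∀ x, r x ∈ T ↔ x ∈ T := by
      intro x
      by_cases hx : r x = x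
      · rw [hx]
      · exact ⟨fun _ => h1 x hx, fun _ => h1 _ (fun h => hx (r.injective h))⟩
    refine ⟨subtypePerm r h2, ?_, ofSubtype_subtypePerm h2 h1⟩
    simp only [Finset.mem_filter, Finset.mem_univ, true_and]
    rw [← hr.1, ← cycleType_ofSubtype, ofSubtype_subtypePerm h2 h1]

open Equiv Equiv.Perm in
theorem card_one_aux {α : Type*} [Fintype α] [DecidableEq α] (S : Finset α) (j : ℕ)
    (hj : 2 * j ≤ Fintype.card α - S.card - 1) :
    (Finset.univ.filter (fun r : Equiv.Perm α =>
      (r * r = 1 ∧ r.support.card = 2 * (j + 1)) ∧ (r.support ∩ S).card = 1)).card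
      = S.card * (Fintype.card α - S.card) * invCount (Fintype.card α - S.card - 1) j := by
  let F : α → Finset (Equiv.Perm α) := fun b => Finset.univ.filter (fun r : Equiv.Perm α =>
      r.cycleType = Multiset.replicate j 2 ∧ r.support ⊆ Sᶜ.erase b)
  have hF : ∀ b ∈ Sᶜ, (F b).card = invCount (Fintype.card α - S.card - 1) j := by
    intro b hb
    have hc : (Sᶜ.erase b).card = Fintype.card α - S.card - 1 := by
      rw [Finset.card_erase_of_mem hb, Finset.card_compl]
    rw [← hc]
    exact card_inv_sub_aux _ _ (by rw [hc]; exact hj)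
  have hfix : ∀ b t x, t ∈ F b → (x ∈ S ∨ x = b) → t x = x := by
    intro b t x ht hx
    by_contra h
    have := (Finset.mem_filter.1 ht).2.2 (mem_support.2 h)
    simp only [Finset.mem_erase, Finset.mem_compl] at this
    tauto
  have key : (Finset.univ.filter (fun r : Equiv.Perm α =>
      (r * r = 1 ∧ r.support.card = 2 * (j + 1)) ∧ (r.support ∩ S).card = 1))
      = (S ×ˢ Sᶜ).biUnion (fun p => (F p.2).image (fun t => swap p.1 p.2 * t)) := by
    ext r
    simp only [Finset.mem_filter, Finset.mem_univ, true_and, Finset.mem_biUnion,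
      Finset.mem_image, Finset.mem_product, Finset.mem_compl]
    constructor
    · rintro ⟨⟨h1, h2⟩, h3⟩
      obtain ⟨a, ha⟩ := Finset.card_eq_one.1 h3
      have haa : a ∈ r.support ∩ S := by rw [ha]; simp
      rw [Finset.mem_inter] at haa
      have hne : r a ≠ a := mem_support.1 haa.1
      have hrr : ∀ x, r (r x) = x := fun x => by
        have := congrArg (fun f : Equiv.Perm α => f x) h1
        simpa using this
      have hb : r a ∉ S := by
        intro hb
        have : r a ∈ r.support ∩ S :=
          Finset.mem_inter.2 ⟨apply_mem_support.2 haa.1, hb⟩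
        rw [ha, Finset.mem_singleton] at this
        exact hne this
      have hta : (swap a (r a) * r) a = a := by simp
      have htb : (swap a (r a) * r) (r a) = r a := by simp [hrr]
      have hto : ∀ x, x ≠ a → x ≠ r a → (swap a (r a) * r) x = r x := by
        intro x hxa hxb
        rw [Equiv.Perm.mul_apply]
        apply swap_apply_of_ne_of_ne
        · intro h; apply hxb; rw [← h, hrr]
        · intro h; exact hxa (r.injective h)
      have hsup : (swap a (r a) * r).support = (r.support.erase a).erase (r a) := by
        ext x
        simp only [Finset.mem_erase, mem_support]
        by_cases hxa : x = a
        · rw [hxa, hta]; simp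
        by_cases hxb : x = r a
        · rw [hxb, htb]; simp
        rw [hto x hxa hxb]; tauto
      refine ⟨(a, r a), ⟨haa.2, hb⟩, swap a (r a) * r, ?_, by simp⟩
      refine Finset.mem_filter.2 ⟨Finset.mem_univ _, (cycleType_iff_aux _ _).2 ⟨?_, ?_⟩, ?_⟩
      · ext x
        rw [Equiv.Perm.mul_apply, Equiv.Perm.one_apply]
        by_cases hxa : x = a
        · rw [hxa, hta, hta]
        by_cases hxb : x = r a
        · rw [hxb, htb, htb]
        rw [hto x hxa hxb, hto, hrr]
        · intro h; apply hxb; rw [← h, hrr]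
        · intro h; exact hxa (r.injective h)
      · rw [hsup, Finset.card_erase_of_mem, Finset.card_erase_of_mem haa.1, h2]
        · omega
        · exact Finset.mem_erase.2 ⟨hne, apply_mem_support.2 haa.1⟩
      · rw [hsup]
        intro x hx
        simp only [Finset.mem_erase, Finset.mem_compl] at hx ⊢
        refine ⟨hx.1, fun hS => hx.2.1 ?_⟩
        have : x ∈ r.support ∩ S := Finset.mem_inter.2 ⟨hx.2.2, hS⟩
        rwa [ha, Finset.mem_singleton] at this
    · rintro ⟨⟨a, b⟩, ⟨haS, hbS⟩, t, ht, rfl⟩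
      dsimp only at haS hbS ht ⊢
      have hab : a ≠ b := fun h => hbS (h ▸ haS)
      have hta := hfix b t a ht (Or.inl haS)
      have htb := hfix b t b ht (Or.inr rfl)
      have hdis : Equiv.Perm.Disjoint (swap a b) t := by
        intro x
        by_cases hxa : x = a
        · right; rw [hxa, hta]
        by_cases hxb : x = b
        · right; rw [hxb, htb]
        left; exact swap_apply_of_ne_of_ne hxa hxb
      obtain ⟨ht1, ht2⟩ := (cycleType_iff_aux _ _).1 (Finset.mem_filter.1 ht).2.1
      refine ⟨⟨?_, ?_⟩, ?_⟩
      · have hc := hdis.commute.eq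
        calc swap a b * t * (swap a b * t) = swap a b * (t * swap a b) * t := by
              simp only [mul_assoc]
          _ = (swap a b * swap a b) * (t * t) := by rw [← hc]; simp only [mul_assoc]
          _ = 1 := by rw [ht1, swap_mul_self, one_mul]
      · rw [hdis.card_support_mul, card_support_swap hab, ht2]; ring
      · rw [Finset.card_eq_one]
        refine ⟨a, ?_⟩
        rw [hdis.support_mul, support_swap hab]
        ext x
        simp only [Finset.mem_inter, Finset.mem_union, Finset.mem_insert, Finset.mem_singleton,
          mem_support]
        constructor
        · rintro ⟨(h | h) | h, hS⟩
          · exact h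
          · exact absurd (h ▸ hS) hbS
          · exact absurd (hfix b t x ht (Or.inl hS)) h
        · rintro rfl
          exact ⟨Or.inl (Or.inl rfl), haS⟩
  rw [key, Finset.card_biUnion]
  · rw [Finset.sum_congr rfl (g := fun _ => invCount (Fintype.card α - S.card - 1) j)]
    · rw [Finset.sum_const, Finset.card_product, Finset.card_compl, smul_eq_mul]
    · intro p hp
      rw [Finset.card_image_of_injective _ (mul_right_injective _)]
      exact hF _ (Finset.mem_product.1 hp).2
  · rintro ⟨a, b⟩ hp ⟨a', b'⟩ hp' hne
    change _root_.Disjoint (Finset.image _ _) (Finset.image _ _)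
    rw [Finset.disjoint_left]
    intro r hr hr'
    apply hne
    simp only [Finset.mem_coe, Finset.mem_product, Finset.mem_compl] at hp hp'
    simp only [Finset.mem_image] at hr hr'
    obtain ⟨t, ht, rfl⟩ := hr
    obtain ⟨t', ht', he⟩ := hr'
    have h1 : (swap a b * t) a = b := by
      rw [Equiv.Perm.mul_apply, hfix b t a ht (Or.inl hp.1), swap_apply_left]
    have h2 : (swap a b * t) a' = b' := by
      rw [← he, Equiv.Perm.mul_apply, hfix b' t' a' ht' (Or.inl hp'.1), swap_apply_left]
    have haa : a' = a := by
      by_contra hx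
      rw [Equiv.Perm.mul_apply, hfix b t a' ht (Or.inl hp'.1),
        swap_apply_of_ne_of_ne hx (fun h : a' = b => hp.2 (h ▸ hp'.1))] at h2
      exact hp'.2 (h2 ▸ hp'.1)
    subst haa
    rw [h1] at h2
    rw [h2]

theorem orderOf_two_aux {α : Type*} [Fintype α] [DecidableEq α] (r : Equiv.Perm α) (k : ℕ)
    (hk : 1 ≤ k) :
    (orderOf r = 2 ∧ r.support.card = 2 * k) ↔ (r * r = 1 ∧ r.support.card = 2 * k) := by
  constructor
  · rintro ⟨h, h'⟩
    exact ⟨by rw [← pow_two, ← h, pow_orderOf_eq_one], h'⟩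
  · rintro ⟨h, h'⟩
    refine ⟨orderOf_eq_prime (by rw [pow_two, h]) ?_, h'⟩
    rintro rfl
    simp at h'
    omega

/-- For `k ≥ 1`, `n ≥ 4k − 1` and a `k`-involution `s ∈ Sym_n`, the number
of `k`-involutions `r` with `|supp r ∩ supp s| = 1` equals `2k·(n−2k)·inv(n−2k−1, k−1)`,
and the total number of `k`-involutions in `Sym_n` equals `inv(n,k)`. -/
theorem count_involutions_one_common_point (n k : ℕ) (hk : 1 ≤ k) (hn : 4 * k - 1 ≤ n)
    (s : Equiv.Perm (Fin n)) (hs : orderOf s = 2) (hsupp : s.support.card = 2 * k) :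
    (Finset.univ.filter (fun r : Equiv.Perm (Fin n) =>
        orderOf r = 2 ∧ r.support.card = 2 * k ∧ (r.support ∩ s.support).card = 1)).card
      = 2 * k * (n - 2 * k) * invCount (n - 2 * k - 1) (k - 1) ∧
    (Finset.univ.filter (fun r : Equiv.Perm (Fin n) =>
        orderOf r = 2 ∧ r.support.card = 2 * k)).card = invCount n k := by
  have hSn : 2 * k ≤ n := by
    have := Finset.card_le_univ s.support
    rwa [hsupp, Fintype.card_fin] at this
  constructor
  · have h := card_one_aux s.support (k - 1) (by rw [hsupp, Fintype.card_fin]; omega)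
    rw [hsupp, Fintype.card_fin, Nat.sub_add_cancel hk] at h
    rw [← h]
    congr 1
    ext r
    simp only [Finset.mem_filter, Finset.mem_univ, true_and]
    rw [← orderOf_two_aux r k hk, and_assoc]
  · have h := card_inv_aux (Fin n) k (by rwa [Fintype.card_fin])
    rw [Fintype.card_fin] at h
    rw [← h]
    congr 1
    ext r
    simp only [Finset.mem_filter, Finset.mem_univ, true_and]
    rw [orderOf_two_aux r k hk, cycleType_iff_aux]
end

section
/- Let n ≥ 9 be a natural number, k an integer with 1 ≤ k ≤ 2√n/3, 0 < ε < 1, G either Alt_n or Sym_n, and s ∈ G a k-involution. Set Z := ⌈(3n/5)·⌈3 log(ε^{−1})⌉⌉, where log is the natural logarithm. If c_1, …, c_Z are independent, uniformly distributed random elements of the conjugacy class s^G, then with probability at least 1 − ε at least ⌈3 log(ε^{−1})⌉ of the c_i do not commute with s. -/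
open scoped Classical

lemma chernoff_aux {α : Type*} [Fintype α] (Good : α → Prop) (m Z : ℕ) :
    ((Finset.univ.filter (fun f : Fin Z → α =>
      ¬ m ≤ (Finset.univ.filter (fun i => Good (f i))).card)).card : ℝ) * (1/2)^m ≤
      ((Fintype.card α : ℝ) - (1/2) * (Finset.univ.filter Good).card)^Z := by
  have h1 : ((Fintype.card α : ℝ) - (1/2) * (Finset.univ.filter Good).card)
      = ∑ a : α, (if Good a then (1/2 : ℝ) else 1) := by
    have : ∀ a : α, (if Good a then (1/2 : ℝ) else 1) = 1 - (1/2) * (if Good a then 1 else 0) := by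
      intro a; split_ifs <;> norm_num
    simp_rw [this, Finset.sum_sub_distrib, ← Finset.mul_sum]
    simp
  have h2 : (∑ a : α, (if Good a then (1/2 : ℝ) else 1))^Z
      = ∑ f : Fin Z → α, (1/2 : ℝ)^(Finset.univ.filter (fun i => Good (f i))).card := by
    have := (Finset.prod_univ_sum (fun _ : Fin Z => (Finset.univ : Finset α))
      (fun _ a => (if Good a then (1/2 : ℝ) else 1)))
    rw [Finset.prod_const, Finset.card_univ, Fintype.card_fin, Fintype.piFinset_univ] at this
    rw [this]
    refine Finset.sum_congr rfl fun f _ => ?_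
    rw [Finset.prod_ite]
    simp
  rw [h1, h2, ← nsmul_eq_mul, ← Finset.sum_const]
  refine (Finset.sum_le_sum (fun f hf => ?_)).trans
    (Finset.sum_le_sum_of_subset_of_nonneg (Finset.filter_subset _ _) (fun f _ _ => by positivity))
  simp only [Finset.mem_filter, Finset.mem_univ, true_and, not_le] at hf
  exact pow_le_pow_of_le_one (by norm_num) (by norm_num) hf.le

lemma chernoff_main {α : Type*} [Fintype α] [Nonempty α] (Good : α → Prop) (n m Z : ℕ) (hn : 9 ≤ n)
    (ε : ℝ) (hε0 : 0 < ε) (hm : 3 * Real.log ε⁻¹ ≤ m)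
    (hZ : (3 * (n : ℝ) / 5) * m ≤ Z)
    (hp : 7 * (Fintype.card α : ℝ) ≤ 2 * n * (Finset.univ.filter Good).card) :
    1 - ε ≤ ((Finset.univ.filter (fun f : Fin Z → α =>
      m ≤ (Finset.univ.filter (fun i => Good (f i))).card)).card : ℝ) /
        (Fintype.card (Fin Z → α) : ℝ) := by
  have hn' : (9:ℝ) ≤ n := by exact_mod_cast hn
  have hA : (0:ℝ) < Fintype.card α := by exact_mod_cast Fintype.card_pos
  set A : ℝ := (Fintype.card α : ℝ) with hAdef
  set B : ℝ := ((Finset.univ.filter Good).card : ℝ) with hB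
  have hBA : B ≤ A := by
    rw [hB, hAdef]; exact_mod_cast Finset.card_le_univ _
  have hc : (Fintype.card (Fin Z → α) : ℝ) = A ^ Z := by simp [hAdef]
  have hsplit := Finset.card_filter_add_card_filter_not (s := (Finset.univ : Finset (Fin Z → α)))
    (fun f : Fin Z → α => m ≤ (Finset.univ.filter (fun i => Good (f i))).card)
  have hsplit' := congrArg (Nat.cast : ℕ → ℝ) hsplit
  rw [Finset.card_univ, hc] at hsplit'
  push_cast at hsplit'
  have haux := chernoff_aux Good m Z
  rw [← hAdef, ← hB] at haux
  set bad : ℝ := ((Finset.univ.filter (fun f : Fin Z → α =>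
      ¬ m ≤ (Finset.univ.filter (fun i => Good (f i))).card)).card : ℝ) with hbad
  have hAZ : 0 < A ^ Z := by positivity
  rw [hc, le_div_iff₀ hAZ]
  suffices h : bad ≤ ε * A ^ Z by linarith
  have h1 : A - 1/2 * B ≤ A * Real.exp (-(7/(4*n))) := by
    have := Real.add_one_le_exp (-(7/(4*n)) : ℝ)
    have h2 : A * (7/(4*n)) ≤ 1/2 * B := by
      rw [mul_div_assoc', div_le_iff₀ (by positivity)]
      linarith
    nlinarith
  have h3 : (A - 1/2 * B)^Z ≤ A^Z * Real.exp (-(7/(4*n)) * Z) := by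
    refine (pow_le_pow_left₀ (by linarith) h1 Z).trans (le_of_eq ?_)
    rw [mul_pow, ← Real.exp_nat_mul]; ring_nf
  have h4 : -(7/(4*n)) * (Z:ℝ) ≤ -(21/20) * m := by
    have : (7/(4*n)) * ((3 * (n : ℝ) / 5) * m) ≤ (7/(4*n)) * (Z:ℝ) :=
      mul_le_mul_of_nonneg_left hZ (by positivity)
    have e : (7/(4*n)) * ((3 * (n : ℝ) / 5) * m) = 21/20 * m := by field_simp; ring
    linarith
  have h5 : (1/2 : ℝ)^m = Real.exp (-(Real.log 2) * m) := by
    rw [mul_comm, Real.exp_nat_mul, Real.exp_neg, Real.exp_log (by norm_num)]; norm_num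
  have h6 : Real.exp (-(21/20) * m) ≤ ε * (1/2 : ℝ)^m := by
    rw [h5]
    have e : ε * Real.exp (-Real.log 2 * m) = Real.exp (Real.log ε + -Real.log 2 * m) := by
      rw [Real.exp_add, Real.exp_log hε0]
    rw [e, Real.exp_le_exp]
    rw [Real.log_inv] at hm
    have := Real.log_two_lt_d9
    have hm0 : (0:ℝ) ≤ m := Nat.cast_nonneg _
    nlinarith
  have h7 : bad * (1/2)^m ≤ (ε * A^Z) * (1/2)^m := by
    calc _ ≤ _ := haux
      _ ≤ _ := h3
      _ ≤ A^Z * Real.exp (-(21/20) * m) := by gcongr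
      _ ≤ A^Z * (ε * (1/2 : ℝ)^m) := by gcongr
      _ = _ := by ring
  exact le_of_mul_le_mul_right h7 (by positivity)

lemma two_trans {n : ℕ} (hn : 9 ≤ n) (H : Subgroup (Equiv.Perm (Fin n)))
    (hH : H = ⊤ ∨ H = alternatingGroup (Fin n)) {a b c d : Fin n} (hab : a ≠ b) (hcd : c ≠ d) :
    ∃ g ∈ H, g a = c ∧ g b = d := by
  obtain ⟨g, hg1, hg2⟩ : ∃ g : Equiv.Perm (Fin n), g a = c ∧ g b = d := by
    refine ⟨Equiv.swap (Equiv.swap a c b) d * Equiv.swap a c, ?_, ?_⟩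
    · rw [Equiv.Perm.mul_apply, Equiv.swap_apply_left, Equiv.swap_apply_of_ne_of_ne _ hcd]
      intro h
      rw [← Equiv.swap_apply_left a c] at h
      exact hab ((Equiv.swap a c).injective (by simpa using h))
    · simp
  rcases hH with rfl | rfl
  · exact ⟨g, trivial, hg1, hg2⟩
  · rcases Int.units_eq_one_or (Equiv.Perm.sign g) with h | h
    · exact ⟨g, h, hg1, hg2⟩
    · have hcard : 1 < (Finset.univ \ {c, d} : Finset (Fin n)).card := by
        have := Finset.le_card_sdiff ({c, d} : Finset (Fin n)) Finset.univ
        have h2 := Finset.card_le_two (a := c) (b := d)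
        simp only [Finset.card_univ, Fintype.card_fin] at this
        omega
      obtain ⟨x, hx, y, hy, hxy⟩ := Finset.one_lt_card.mp hcard
      simp at hx hy
      refine ⟨Equiv.swap x y * g, ?_, ?_, ?_⟩
      · rw [Equiv.Perm.mem_alternatingGroup, map_mul, h, Equiv.Perm.sign_swap hxy]; rfl
      · rw [Equiv.Perm.mul_apply, hg1]
        exact Equiv.swap_apply_of_ne_of_ne (Ne.symm hx.1) (Ne.symm hy.1)
      · rw [Equiv.Perm.mul_apply, hg2]
        exact Equiv.swap_apply_of_ne_of_ne (Ne.symm hx.2) (Ne.symm hy.2)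

lemma count_eq {n : ℕ} (hn : 9 ≤ n) (H : Subgroup (Equiv.Perm (Fin n)))
    (hH : H = ⊤ ∨ H = alternatingGroup (Fin n)) (s : Equiv.Perm (Fin n))
    {a b c d : Fin n} (hab : a ≠ b) (hcd : c ≠ d) :
    (Finset.univ.filter (fun r : {r : Equiv.Perm (Fin n) // ∃ g ∈ H, r = g⁻¹ * s * g} =>
      r.1 a ≠ a ∧ r.1 b = b)).card ≤
    (Finset.univ.filter (fun r : {r : Equiv.Perm (Fin n) // ∃ g ∈ H, r = g⁻¹ * s * g} =>
      r.1 c ≠ c ∧ r.1 d = d)).card := by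
  obtain ⟨g, hg, rfl, rfl⟩ := two_trans hn H hH hab hcd
  refine Finset.card_le_card_of_injOn (fun r => ⟨g * r.1 * g⁻¹, ?_⟩) ?_ ?_
  · obtain ⟨h, hh, e⟩ := r.2
    refine ⟨h * g⁻¹, H.mul_mem hh (H.inv_mem hg), ?_⟩
    rw [e]; group
  · intro r hr
    simpa using hr
  · intro r _ r' _ e
    exact Subtype.ext (by simpa using e)

lemma prob_bound (n : ℕ) (hn : 9 ≤ n)
    (k : ℕ) (hk1 : 1 ≤ k) (hk2 : (k : ℝ) ≤ 2 * Real.sqrt n / 3)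
    (H : Subgroup (Equiv.Perm (Fin n))) (hH : H = ⊤ ∨ H = alternatingGroup (Fin n))
    (s : Equiv.Perm (Fin n)) (hs : orderOf s = 2)
    (hsupp : s.support.card = 2 * k) :
    7 * (Fintype.card {r : Equiv.Perm (Fin n) // ∃ g ∈ H, r = g⁻¹ * s * g} : ℝ) ≤
    2 * n * (Finset.univ.filter
      (fun r : {r : Equiv.Perm (Fin n) // ∃ g ∈ H, r = g⁻¹ * s * g} => s * r.1 ≠ r.1 * s)).card := by
  set α := {r : Equiv.Perm (Fin n) // ∃ g ∈ H, r = g⁻¹ * s * g}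
  obtain ⟨x, hx⟩ : ∃ x, s x ≠ x := by
    have : 0 < s.support.card := by omega
    obtain ⟨x, hx⟩ := Finset.card_pos.mp this
    exact ⟨x, by simpa using hx⟩
  have hss : s (s x) = x := by
    have := pow_orderOf_eq_one s
    rw [hs, pow_two] at this
    exact congrArg (fun f : Equiv.Perm (Fin n) => f x) this
  let N : Fin n → Fin n → ℕ := fun a b =>
    (Finset.univ.filter (fun r : α => r.1 a ≠ a ∧ r.1 b = b)).card
  have hNeq : ∀ a b, a ≠ b → N a b = N x (s x) := fun a b hab =>
    le_antisymm (count_eq hn H hH s hab hx.symm) (count_eq hn H hH s hx.symm hab)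
  have hNdiag : ∀ a, N a a = 0 := by
    intro a; simp only [N, Finset.card_eq_zero]; ext r; simp
  have hgood : N x (s x) + N (s x) x ≤ (Finset.univ.filter
      (fun r : α => s * r.1 ≠ r.1 * s)).card := by
    rw [← Finset.card_union_of_disjoint]
    · refine Finset.card_le_card fun r hr => ?_
      simp only [Finset.mem_filter, Finset.mem_univ, true_and]
      intro hcomm
      have e1 : s (r.1 x) = r.1 (s x) := congrArg (fun f : Equiv.Perm (Fin n) => f x) hcomm
      have e2 : s (r.1 (s x)) = r.1 (s (s x)) :=
        congrArg (fun f : Equiv.Perm (Fin n) => f (s x)) hcomm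
      rw [hss] at e2
      simp only [Finset.mem_union, Finset.mem_filter, Finset.mem_univ, true_and] at hr
      rcases hr with ⟨h1, h2⟩ | ⟨h1, h2⟩
      · rw [h2, hss] at e2; exact h1 e2.symm
      · rw [h2] at e1; exact h1 e1.symm
    · rw [Finset.disjoint_left]
      intro r hr hr'
      simp at hr hr'
      exact hr.1 hr'.2
  have hr : ∀ r : α, r.1.support.card = 2 * k := by
    rintro ⟨r, g, hg, rfl⟩
    have := Equiv.Perm.card_support_conj (σ := g⁻¹) (τ := s)
    rw [inv_inv] at this
    exact this.trans hsupp
  have hdc : ∑ a, ∑ b, N a b = Fintype.card α * (2 * k * (n - 2 * k)) := by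
    have e1 : ∀ a b, N a b = ∑ r : α, (if r.1 a ≠ a then 1 else 0) * (if r.1 b = b then 1 else 0) := by
      intro a b
      simp only [N, Finset.card_filter]
      refine Finset.sum_congr rfl fun r _ => ?_
      by_cases h1 : r.1 a = a <;> by_cases h2 : r.1 b = b <;> simp [h1, h2]
    have e2 : ∀ r : α, ∑ a, ∑ b, (if r.1 a ≠ a then 1 else 0) * (if r.1 b = b then 1 else 0)
        = 2 * k * (n - 2 * k) := by
      intro r
      rw [← Finset.sum_mul_sum, ← Finset.card_filter, ← Finset.card_filter]
      have hs1 : (Finset.univ.filter (fun a => r.1 a ≠ a)).card = 2 * k := by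
        rw [← hr r]; congr 1
      have hs2 := Finset.card_filter_add_card_filter_not (s := (Finset.univ : Finset (Fin n)))
        (fun a => r.1 a = a)
      rw [Finset.card_univ, Fintype.card_fin] at hs2
      rw [hs1]
      congr 1
      have hs3 : (Finset.univ.filter (fun a => ¬ r.1 a = a)).card = 2 * k := hs1
      omega
    simp_rw [e1]
    calc _ = ∑ r : α, ∑ a, ∑ b, (if r.1 a ≠ a then 1 else 0) * (if r.1 b = b then 1 else 0) := by
          rw [Finset.sum_comm]
          simp_rw [Finset.sum_comm (s := (Finset.univ : Finset (Fin n))) (t := (Finset.univ : Finset α))]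
          rw [Finset.sum_congr rfl]
          intro r _
          exact Finset.sum_comm
      _ = _ := by
          rw [Finset.sum_congr rfl (fun r _ => e2 r)]
          simp
  have hdc2 : ∑ a, ∑ b, N a b = n * (n - 1) * N x (s x) := by
    have e : ∀ a, ∑ b, N a b = (n - 1) * N x (s x) := by
      intro a
      rw [← Finset.add_sum_erase _ _ (Finset.mem_univ a), hNdiag, zero_add,
        Finset.sum_congr rfl (fun b hb => hNeq a b (Finset.ne_of_mem_erase hb).symm)]
      simp
    simp_rw [e]
    simp [mul_assoc]
  rw [hNeq (s x) x hx] at hgood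
  have h9 : 9 * k^2 ≤ 4 * n := by
    have hsq := Real.sq_sqrt (Nat.cast_nonneg n : (0:ℝ) ≤ n)
    have : (9:ℝ) * k^2 ≤ 4 * n := by
      have hk0 : (0:ℝ) ≤ k := Nat.cast_nonneg k
      nlinarith [Real.sqrt_nonneg (n:ℝ)]
    exact_mod_cast this
  have hkn : 2 * k + 2 ≤ n := by nlinarith
  have hE : (Fintype.card α : ℝ) * (2 * k * (n - 2 * k)) = n * (n - 1) * N x (s x) := by
    have := congrArg (Nat.cast : ℕ → ℝ) (hdc.symm.trans hdc2)
    push_cast [Nat.cast_sub (show 2 * k ≤ n by omega), Nat.cast_sub (show 1 ≤ n by omega)] at this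
    exact this
  have hG : 2 * (N x (s x) : ℝ) ≤ ((Finset.univ.filter
      (fun r : α => s * r.1 ≠ r.1 * s)).card : ℝ) := by
    have : 2 * N x (s x) ≤ (Finset.univ.filter
      (fun r : α => s * r.1 ≠ r.1 * s)).card := by omega
    exact_mod_cast this
  have hn' : (9:ℝ) ≤ n := by exact_mod_cast hn
  have hk' : (1:ℝ) ≤ k := by exact_mod_cast hk1
  have hkn' : (2:ℝ) * k + 2 ≤ n := by exact_mod_cast hkn
  have hA : (0:ℝ) ≤ Fintype.card α := Nat.cast_nonneg _
  have hq : 7 * ((n:ℝ) - 1) ≤ 4 * (2 * k * (n - 2 * k)) := by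
    nlinarith [mul_nonneg (sub_nonneg.2 hk') (sub_nonneg.2 hkn')]
  have hfin : 7 * (Fintype.card α : ℝ) ≤ 4 * n * N x (s x) := by
    have : (7 * (Fintype.card α : ℝ)) * (n - 1) ≤ (4 * n * N x (s x)) * (n - 1) := by
      have := mul_le_mul_of_nonneg_left hq hA
      nlinarith
    exact le_of_mul_le_mul_right this (by linarith)
  nlinarith


/-- Let `n ≥ 9`, `1 ≤ k ≤ 2√n/3`, `0 < ε < 1`, `G ∈ {Alt_n, Sym_n}`,
`s ∈ G` a `k`-involution and `Z = ⌈(3n/5)·⌈3 log ε⁻¹⌉⌉`.  Among all `Z`-tuples of elements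
of the conjugacy class `s^G` (each tuple equally likely, modelling independent uniform
random conjugates), the proportion of tuples containing at least `⌈3 log ε⁻¹⌉` entries not
commuting with `s` is at least `1 − ε`. -/
theorem enough_nonCommuting_conjugates (n : ℕ) (hn : 9 ≤ n)
    (k : ℕ) (hk1 : 1 ≤ k) (hk2 : (k : ℝ) ≤ 2 * Real.sqrt n / 3)
    (ε : ℝ) (hε0 : 0 < ε) (hε1 : ε < 1)
    (H : Subgroup (Equiv.Perm (Fin n))) (hH : H = ⊤ ∨ H = alternatingGroup (Fin n))
    (s : Equiv.Perm (Fin n)) (hsH : s ∈ H) (hs : orderOf s = 2)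
    (hsupp : s.support.card = 2 * k)
    (Z : ℕ) (hZ : Z = ⌈(3 * (n : ℝ) / 5) * ((⌈3 * Real.log ε⁻¹⌉₊ : ℕ) : ℝ)⌉₊) :
    1 - ε ≤
      ((Finset.univ.filter
          (fun f : Fin Z → {r : Equiv.Perm (Fin n) // ∃ g ∈ H, r = g⁻¹ * s * g} =>
            ⌈3 * Real.log ε⁻¹⌉₊ ≤ (Finset.univ.filter (fun i : Fin Z =>
              s * ((f i : Equiv.Perm (Fin n))) ≠ ((f i : Equiv.Perm (Fin n))) * s)).card)).card : ℝ) /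
        (Fintype.card (Fin Z → {r : Equiv.Perm (Fin n) // ∃ g ∈ H, r = g⁻¹ * s * g}) : ℝ) := by
  have : Nonempty {r : Equiv.Perm (Fin n) // ∃ g ∈ H, r = g⁻¹ * s * g} :=
    ⟨⟨s, 1, H.one_mem, by simp⟩⟩
  have hm := Nat.le_ceil (3 * Real.log ε⁻¹)
  generalize ⌈3 * Real.log ε⁻¹⌉₊ = m at *
  have hZ' : (3 * (n : ℝ) / 5) * m ≤ Z := by rw [hZ]; exact Nat.le_ceil _
  clear hZ
  have hp := prob_bound n hn k hk1 hk2 H hH s hs hsupp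
  have key := chernoff_main (fun r : {r : Equiv.Perm (Fin n) // ∃ g ∈ H, r = g⁻¹ * s * g} =>
    s * r.1 ≠ r.1 * s) n m Z hn ε hε0 hm hZ' (by convert hp)
  convert key
end

section
/- Let n ≥ 9 be a natural number, k an integer with 1 ≤ k ≤ 2√n/3, 0 < ε < 1, G either Alt_n or Sym_n, and s ∈ G a k-involution. Set Z := ⌈3 log(ε^{−1})⌉, where log is the natural logarithm. Let M be the set of elements of the conjugacy class s^G that do not commute with s. If r_1, …, r_Z are independent, uniformly distributed random elements of M, then with probability at least 1 − ε there is some i such that (s·r_i)² is a 3-cycle. -/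
open scoped Classical

/-- Amplification: independent repetition. -/
lemma aux_prob {α : Type*} [Fintype α] (P : α → Prop) (hpos : 0 < Fintype.card α)
    (h : 2 * Fintype.card α ≤ 7 * (Finset.univ.filter P).card)
    (ε : ℝ) (hε0 : 0 < ε) (Z : ℕ) (hZ : Z = ⌈3 * Real.log ε⁻¹⌉₊) :
    1 - ε ≤ ((Finset.univ.filter (fun f : Fin Z → α => ∃ i, P (f i))).card : ℝ) /
      (Fintype.card (Fin Z → α) : ℝ) := by
  have h1 : (Finset.univ.filter (fun f : Fin Z → α => ¬ ∃ i, P (f i))).card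
      = (Finset.univ.filter (fun a => ¬ P a)).card ^ Z := by
    have : (Finset.univ.filter (fun f : Fin Z → α => ¬ ∃ i, P (f i)))
        = Fintype.piFinset (fun _ : Fin Z => Finset.univ.filter (fun a => ¬ P a)) := by
      ext f; simp
    rw [this, Fintype.card_piFinset]; simp
  have h2 := Finset.card_filter_add_card_filter_not (s := (Finset.univ : Finset (Fin Z → α)))
    (fun f => ∃ i, P (f i))
  have h3 := Finset.card_filter_add_card_filter_not (s := (Finset.univ : Finset α)) P
  rw [h1] at h2
  have hcard : (Finset.univ : Finset (Fin Z → α)).card = (Fintype.card α) ^ Z := by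
    simp
  rw [Finset.card_univ] at h3
  rw [hcard] at h2
  have hc2 : Fintype.card (Fin Z → α) = (Fintype.card α) ^ Z := by simp
  rw [hc2]
  set m := Fintype.card α
  set b := (Finset.univ.filter (fun a => ¬ P a)).card
  set g := (Finset.univ.filter P).card
  set x := (Finset.univ.filter (fun f : Fin Z → α => ∃ i, P (f i))).card
  have hb : 7 * b ≤ 5 * m := by omega
  have hmR : (0:ℝ) < m := by exact_mod_cast hpos
  have hbR : (7:ℝ) * b ≤ 5 * m := by exact_mod_cast hb
  have h2R : (x:ℝ) + (b:ℝ)^Z = (m:ℝ)^Z := by exact_mod_cast h2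
  have hq : (b:ℝ)/m ≤ 5/7 := by rw [div_le_div_iff₀ hmR (by norm_num)]; linarith
  have he : (5/7:ℝ) ≤ Real.exp (-(1/3)) := by
    have h3 : ((5/7:ℝ))^3 ≤ (Real.exp (-(1/3)))^3 := by
      rw [← Real.exp_nat_mul]
      have : Real.exp (((3:ℕ):ℝ) * (-(1/3))) = (Real.exp 1)⁻¹ := by
        rw [← Real.exp_neg]; norm_num
      rw [this, le_inv_comm₀ (by norm_num) (Real.exp_pos _)]
      have := Real.exp_one_lt_d9
      norm_num
      linarith
    exact le_of_pow_le_pow_left₀ (by norm_num) (Real.exp_pos _).le h3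
  have hfin : ((b:ℝ)/m)^Z ≤ ε := by
    calc ((b:ℝ)/m)^Z ≤ (Real.exp (-(1/3)))^Z := by
          apply pow_le_pow_left₀ (by positivity) (hq.trans he)
      _ = Real.exp (Z * (-(1/3))) := by rw [← Real.exp_nat_mul]
      _ ≤ Real.exp (Real.log ε) := by
          apply Real.exp_le_exp.mpr
          have := Nat.le_ceil (3 * Real.log ε⁻¹)
          rw [← hZ, Real.log_inv] at this
          linarith
      _ = ε := Real.exp_log hε0
  have hx : (x:ℝ) = (m:ℝ)^Z - (b:ℝ)^Z := by linarith
  rw [Nat.cast_pow, hx, sub_div, div_self (by positivity), ← div_pow]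
  linarith

/-- If two involutions have supports meeting in one point, the square of the product is a
3-cycle. -/
lemma aux_threeCycle {α : Type*} [Fintype α] [DecidableEq α] (s r : Equiv.Perm α)
    (hs : ∀ x, s (s x) = x) (hr : ∀ x, r (r x) = x)
    (h : (s.support ∩ r.support).card = 1) : ((s * r) ^ 2).IsThreeCycle := by
  obtain ⟨x, hx⟩ := Finset.card_eq_one.mp h
  have key : ∀ p, s p ≠ p → r p ≠ p → p = x := by
    intro p h1 h2
    have : p ∈ s.support ∩ r.support := by simp [h1, h2]
    rw [hx] at this; simpa using this
  have hxm : x ∈ s.support ∩ r.support := by rw [hx]; simp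
  simp only [Finset.mem_inter, Equiv.Perm.mem_support] at hxm
  obtain ⟨hsx, hrx⟩ := hxm
  have hyr : r (s x) = s x := by
    by_contra hc
    exact hsx (key (s x) (by rw [hs]; exact hsx.symm) hc)
  have hzs : s (r x) = r x := by
    by_contra hc
    exact hrx (key (r x) hc (by rw [hr]; exact hrx.symm))
  have hyz : r x ≠ s x := by
    intro hc
    rw [← hc] at hyr
    rw [hr] at hyr
    exact hrx hyr.symm
  have e : (s * r) ^ 2 = Equiv.swap x (r x) * Equiv.swap x (s x) := by
    ext p
    rw [pow_two]
    simp only [Equiv.Perm.mul_apply]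
    by_cases h1 : p = x
    · subst h1
      rw [Equiv.swap_apply_left, Equiv.swap_apply_of_ne_of_ne hsx (Ne.symm hyz), hzs, hr]
    by_cases h2 : p = s x
    · subst h2
      rw [Equiv.swap_apply_right, Equiv.swap_apply_left, hyr, hs, hzs]
    rw [Equiv.swap_apply_of_ne_of_ne h1 h2]
    by_cases h3 : p = r x
    · subst h3
      rw [Equiv.swap_apply_right, hr, hyr, hs]
    rw [Equiv.swap_apply_of_ne_of_ne h1 h3]
    by_cases h4 : r p = p
    · rw [h4]
      by_cases h5 : s p = p
      · rw [h5, h4, h5]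
      · have : r (s p) = s p := by
          by_contra hc
          have := key (s p) (by rw [hs]; exact Ne.symm h5) hc
          apply h2; rw [← this, hs]
        rw [this, hs]
    · have h6 : s p = p := by
        by_contra hc; exact h1 (key p hc h4)
      have h7 : s (r p) = r p := by
        by_contra hc
        have := key (r p) hc (by rw [hr]; exact Ne.symm h4)
        apply h3; rw [← this, hr]
      rw [h7, hr, h6]
  rw [e]
  exact Equiv.Perm.isThreeCycle_swap_mul_swap_same (Ne.symm hrx) (Ne.symm hsx) hyz

/-- Conjugacy in `H`. -/
lemma aux_conj {α : Type*} [Fintype α] [DecidableEq α] (H : Subgroup (Equiv.Perm α))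
    (hH : H = ⊤ ∨ H = alternatingGroup α) (s r : Equiv.Perm α)
    (hs : ∀ x, s (s x) = x) (hs1 : s ≠ 1) :
    (∃ g ∈ H, r = g⁻¹ * s * g) ↔ IsConj s r := by
  rw [isConj_iff]
  constructor
  · rintro ⟨g, -, rfl⟩
    exact ⟨g⁻¹, by simp⟩
  · rintro ⟨c, rfl⟩
    rcases hH with rfl | rfl
    · exact ⟨c⁻¹, by simp, by simp⟩
    · obtain ⟨x, hx⟩ : ∃ x, s x ≠ x := by
        by_contra hc; push Not at hc; exact hs1 (Equiv.ext hc)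
      rcases Int.units_eq_one_or (Equiv.Perm.sign c) with h | h
      · exact ⟨c⁻¹, by simp [Equiv.Perm.mem_alternatingGroup, h], by simp⟩
      · refine ⟨Equiv.swap x (s x) * c⁻¹, ?_, ?_⟩
        · simp [Equiv.Perm.mem_alternatingGroup, h, Equiv.Perm.sign_swap (Ne.symm hx)]
        · have := Equiv.mul_swap_eq_swap_mul s x (s x)
          rw [hs, Equiv.swap_comm (s x) x] at this
          rw [mul_inv_rev, inv_inv, Equiv.swap_inv]
          have h2 : Equiv.swap x (s x) * s * Equiv.swap x (s x) = s := by
            rw [mul_assoc, this, ← mul_assoc]; simp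
          calc c * s * c⁻¹ = c * (Equiv.swap x (s x) * s * Equiv.swap x (s x)) * c⁻¹ := by rw [h2]
            _ = _ := by group

/-- Fibres of the support map have constant cardinality. -/
lemma aux_fib {α : Type*} [Fintype α] [DecidableEq α] (s : Equiv.Perm α) (A : Finset α)
    (hA : A.card = s.support.card) :
    (Finset.univ.filter (fun r : Equiv.Perm α => IsConj s r ∧ r.support = A)).card
    = (Finset.univ.filter (fun r : Equiv.Perm α => IsConj s r ∧ r.support = s.support)).card := by
  obtain ⟨σ, hσ⟩ : ∃ σ : Equiv.Perm α, s.support.map σ.toEmbedding = A := by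
    have e : {x // x ∈ s.support} ≃ {x // x ∈ A} := Finset.equivOfCardEq hA.symm
    refine ⟨e.extendSubtype, Finset.eq_of_subset_of_card_le ?_ (by simp [hA])⟩
    intro y hy
    simp only [Finset.mem_map, Equiv.coe_toEmbedding] at hy
    obtain ⟨x, hx, rfl⟩ := hy
    exact e.extendSubtype_mem x hx
  symm
  apply Finset.card_bij (fun r _ => σ * r * σ⁻¹)
  · intro r hr
    simp only [Finset.mem_filter, Finset.mem_univ, true_and] at hr ⊢
    refine ⟨hr.1.trans (isConj_iff.mpr ⟨σ, rfl⟩), ?_⟩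
    rw [Equiv.Perm.support_conj, hr.2, hσ]
  · intro a _ b _ hab
    simpa using hab
  · intro b hb
    simp only [Finset.mem_filter, Finset.mem_univ, true_and] at hb
    refine ⟨σ⁻¹ * b * σ, ?_, by group⟩
    have hc : IsConj b (σ⁻¹ * b * σ) := isConj_iff.mpr ⟨σ⁻¹, by simp⟩
    simp only [Finset.mem_filter, Finset.mem_univ, true_and]
    refine ⟨hb.1.trans hc, ?_⟩
    have h1 : (σ * (σ⁻¹ * b * σ) * σ⁻¹).support = (σ⁻¹ * b * σ).support.map σ.toEmbedding :=
      Equiv.Perm.support_conj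
    have h2 : σ * (σ⁻¹ * b * σ) * σ⁻¹ = b := by group
    rw [h2, hb.2, ← hσ] at h1
    exact (Finset.map_injective _ h1).symm

/-- Counting by fibres. -/
lemma aux_count {α : Type*} [Fintype α] [DecidableEq α] (s : Equiv.Perm α)
    (F : Finset (Finset α)) (hF : ∀ A ∈ F, A.card = s.support.card) :
    (Finset.univ.filter (fun r : Equiv.Perm α => IsConj s r ∧ r.support ∈ F)).card
    = F.card * (Finset.univ.filter
      (fun r : Equiv.Perm α => IsConj s r ∧ r.support = s.support)).card := by
  rw [Finset.card_eq_sum_card_fiberwise (f := fun r => r.support) (t := F)]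
  · rw [← smul_eq_mul, ← Finset.sum_const]
    apply Finset.sum_congr rfl
    intro A hA
    rw [← aux_fib s A (hF A hA), Finset.filter_filter]
    congr 1
    ext r
    simp only [Finset.mem_filter, Finset.mem_univ, true_and]
    constructor
    · rintro ⟨⟨a, b⟩, c⟩; exact ⟨a, c⟩
    · rintro ⟨a, c⟩; exact ⟨⟨a, c ▸ hA⟩, c⟩
  · intro r hr
    simp at hr
    exact hr.2

lemma aux_geom (a : ℕ → ℝ) (m : ℕ) (h : ∀ i, a (i+1) ≤ 4/9 * a i) :
    ∑ i ∈ Finset.range m, a i ≤ 9/5 * (a 0 - a m) := by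
  induction m with
  | zero => simp
  | succ m ih => rw [Finset.sum_range_succ]; linarith [h m]

/-- The numerical estimate. -/
lemma aux_num (n k : ℕ) (hn : 9 ≤ n) (hk1 : 1 ≤ k) (hk : 9 * k ^ 2 ≤ 4 * n) :
    2 * n.choose (2*k) ≤ 7 * (2 * k * (n - 2*k).choose (2*k-1)) + 2 * (n - 2*k).choose (2*k) := by
  by_cases h94 : n = 9 ∧ k = 2
  · obtain ⟨rfl, rfl⟩ := h94
    decide
  have hkn : 4 * k ≤ n := by
    by_cases h : k ≤ 2
    · omega
    · nlinarith
  obtain ⟨d, rfl⟩ := Nat.exists_eq_add_of_le hkn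
  set K := 2 * k with hK
  have e1 : 4 * k + d - K = K + d := by omega
  rw [e1]
  let N : ℕ → ℝ := fun j => (K.choose j : ℝ) * ((K+d).choose (K - j) : ℝ)
  have hN0 : ∀ j, 0 ≤ N j := fun j => by positivity
  have hrec : ∀ j, j < K → N (j+1) * ((j+1) * (d + j + 1)) = N j * ((K:ℝ) - j)^2 := by
    intro j hj
    obtain ⟨t, ht⟩ := Nat.exists_eq_add_of_lt hj
    have c1 := Nat.choose_succ_right_eq K j
    have c2 := Nat.choose_succ_right_eq (K+d) t
    have a1 : K - j = t + 1 := by omega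
    have a2 : K - (j+1) = t := by omega
    have a3 : K + d - t = d + j + 1 := by omega
    rw [a1] at c1
    rw [a3] at c2
    have c1R : (K.choose (j+1) : ℝ) * (j+1) = K.choose j * (t+1) := by exact_mod_cast c1
    have c2R : ((K+d).choose (t+1) : ℝ) * (t+1) = (K+d).choose t * (d+j+1) := by exact_mod_cast c2
    have a4 : (K:ℝ) - j = t + 1 := by rw [ht]; push_cast; ring
    simp only [N]
    rw [a1, a2, a4]
    calc _ = ((K.choose (j+1) : ℝ) * (j+1)) * ((K+d).choose t * (d+j+1)) := by ring
      _ = _ := by rw [c1R, ← c2R]; ring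
  have hzero : ∀ j, K < j → N j = 0 := by
    intro j hj; simp [N, Nat.choose_eq_zero_of_lt hj]
  have hkR : (9:ℝ) * k^2 ≤ 4 * (4 * k + d) := by exact_mod_cast hk
  have hKR : (K:ℝ) = 2 * k := by simp [hK]
  have hstep : ∀ j, 2 ≤ j → N (j+1) * (j+1) ≤ 16/9 * N j := by
    intro j hj
    by_cases hjK : j < K
    · have hr := hrec j hjK
      have hjR : (2:ℝ) ≤ j := by exact_mod_cast hj
      have hjKR : (j:ℝ) ≤ K := by exact_mod_cast hjK.le
      have hD : (0:ℝ) < d + j + 1 := by positivity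
      have hb : ((K:ℝ) - j)^2 ≤ 16/9 * (d + j + 1) := by
        have : ((K:ℝ) - j)^2 ≤ (K - 2)^2 := by
          apply pow_le_pow_left₀ <;> linarith
        have hk0 : (0:ℝ) ≤ k := by positivity
        rw [hKR] at *
        nlinarith
      have : N (j+1) * (j+1) * (d+j+1) ≤ 16/9 * N j * (d+j+1) := by
        calc _ = N j * ((K:ℝ) - j)^2 := by rw [← hr]; ring
          _ ≤ N j * (16/9 * (d + j + 1)) := mul_le_mul_of_nonneg_left hb (hN0 j)
          _ = _ := by ring
      exact le_of_mul_le_mul_right this hD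
    · rw [hzero (j+1) (by omega)]
      have := hN0 j
      linarith
  have hgeo : ∀ i, N (i+1+3) ≤ 4/9 * N (i+3) := by
    intro i
    have := hstep (i+3) (by omega)
    have h1 : N (i+1+3) * 4 ≤ N (i+3+1) * (((i+3:ℕ):ℝ)+1) := by
      have e : i+1+3 = i+3+1 := by omega
      rw [e]
      apply mul_le_mul_of_nonneg_left _ (hN0 _)
      push_cast
      have : (0:ℝ) ≤ i := by positivity
      linarith
    linarith
  have h3 : N 3 ≤ 16/27 * N 2 := by
    have := hstep 2 le_rfl
    norm_num at this
    linarith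
  have h2 : N 2 ≤ 6/5 * N 1 := by
    have hr := hrec 1 (by omega)
    norm_num at hr
    have hD : (0:ℝ) < d + 1 + 1 := by positivity
    have hb : ((K:ℝ) - 1)^2 ≤ 12/5 * (d + 1 + 1) := by
      rw [hKR]
      by_cases hk4 : 4 ≤ k
      · have : (4:ℝ) ≤ k := by exact_mod_cast hk4
        nlinarith
      · have hd : (k = 1 ∧ 5 ≤ d) ∨ (k = 2 ∧ 2 ≤ d) ∨ (k = 3 ∧ 9 ≤ d) := by
          have : k = 1 ∨ k = 2 ∨ k = 3 := by omega
          rcases this with h | h | h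
          · left; omega
          · right; left; omega
          · right; right; subst h; omega
        rcases hd with ⟨h, h'⟩ | ⟨h, h'⟩ | ⟨h, h'⟩
        · have : (5:ℝ) ≤ d := by exact_mod_cast h'
          rw [h]; push_cast; linarith
        · have : (2:ℝ) ≤ d := by exact_mod_cast h'
          rw [h]; push_cast; linarith
        · have : (9:ℝ) ≤ d := by exact_mod_cast h'
          rw [h]; push_cast; linarith
    have : N 2 * (d+1+1) ≤ 6/5 * N 1 * (d+1+1) := by
      have := mul_le_mul_of_nonneg_left hb (hN0 1)
      linarith
    exact le_of_mul_le_mul_right this hD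
  have hV : ((4 * k + d).choose K : ℝ) = ∑ j ∈ Finset.range (K+1), N j := by
    have e : 4 * k + d = K + (K + d) := by omega
    rw [e, Nat.add_choose_eq,
      Finset.Nat.sum_antidiagonal_eq_sum_range_succ (fun i j => K.choose i * (K+d).choose j)]
    push_cast
    rfl
  have hV2 : ((4 * k + d).choose K : ℝ) ≤ ∑ j ∈ Finset.range (K+3), N j := by
    rw [hV]
    apply Finset.sum_le_sum_of_subset_of_nonneg
    · intro x; simp; omega
    · intros; apply hN0
  rw [add_comm K 3, Finset.sum_range_add] at hV2
  have hg := aux_geom (fun i => N (i+3)) K hgeo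
  have hg2 : ∑ x ∈ Finset.range K, N (3 + x) ≤ 9/5 * N 3 := by
    have : ∀ x, N (3 + x) = N (x + 3) := fun x => by rw [add_comm]
    simp only [this]
    have := hN0 (K+3)
    simp only [zero_add] at hg
    linarith
  have hs3 : ∑ x ∈ Finset.range 3, N x = N 0 + N 1 + N 2 := by
    simp [Finset.sum_range_succ]
  rw [hs3] at hV2
  have hn0 : N 0 = ((K+d).choose K : ℝ) := by simp [N]
  have hn1 : N 1 = (K:ℝ) * ((K+d).choose (K-1) : ℝ) := by simp [N]
  have hN1 := hN0 1
  have fin : 2 * ((4 * k + d).choose K : ℝ) ≤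
      7 * ((K:ℝ) * ((K+d).choose (K-1) : ℝ)) + 2 * ((K+d).choose K : ℝ) := by
    rw [← hn1, ← hn0]
    linarith
  exact_mod_cast fin

lemma aux_F1 {α : Type*} [Fintype α] [DecidableEq α] (S : Finset α) (K : ℕ) (hK : 1 ≤ K) :
    S.card * (Fintype.card α - S.card).choose (K-1) ≤
    ((Finset.powersetCard K (Finset.univ : Finset α)).filter
      (fun A => (S ∩ A).card = 1)).card := by
  rw [← Finset.card_compl, ← Finset.card_powersetCard, ← Finset.card_product]
  have key : ∀ p ∈ S ×ˢ Finset.powersetCard (K-1) Sᶜ,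
      S ∩ insert p.1 p.2 = {p.1} ∧ Sᶜ ∩ insert p.1 p.2 = p.2 ∧ p.1 ∉ p.2 ∧ p.2.card = K - 1 := by
    rintro ⟨a, B⟩ h
    simp only [Finset.mem_product, Finset.mem_powersetCard] at h
    obtain ⟨ha, hB, hc⟩ := h
    have hB' : ∀ x ∈ B, x ∉ S := fun x hx => by simpa using hB hx
    refine ⟨?_, ?_, fun h => hB' a h ha, hc⟩
    · ext x
      simp only [Finset.mem_inter, Finset.mem_insert, Finset.mem_singleton]
      constructor
      · rintro ⟨h1, h2 | h2⟩
        · exact h2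
        · exact absurd h1 (hB' x h2)
      · rintro rfl; exact ⟨ha, Or.inl rfl⟩
    · ext x
      simp only [Finset.mem_inter, Finset.mem_insert, Finset.mem_compl]
      constructor
      · rintro ⟨h1, h2 | h2⟩
        · subst h2; exact absurd ha h1
        · exact h2
      · intro h; exact ⟨hB' x h, Or.inr h⟩
  apply Finset.card_le_card_of_injOn (fun p => insert p.1 p.2)
  · intro p hp
    obtain ⟨h1, h2, h3, h4⟩ := key p hp
    simp only [Finset.coe_filter, Set.mem_ofPred_eq, Finset.mem_powersetCard, Finset.subset_univ,
      true_and, h1, Finset.card_singleton, and_true]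
    rw [Finset.card_insert_of_notMem h3, h4]; omega
  · intro p hp q hq hpq
    obtain ⟨h1, h2, -, -⟩ := key p hp
    obtain ⟨h1', h2', -, -⟩ := key q hq
    simp only at hpq
    rw [hpq] at h1 h2
    rw [h1'] at h1
    rw [h2'] at h2
    exact Prod.ext (Finset.singleton_injective h1).symm h2.symm

lemma aux_F2 {α : Type*} [Fintype α] [DecidableEq α] (S : Finset α) (K : ℕ) :
    ((Finset.powersetCard K (Finset.univ : Finset α)).filter
      (fun A => ¬ Disjoint S A)).card + (Fintype.card α - S.card).choose K =
      (Fintype.card α).choose K := by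
  have h := Finset.card_filter_add_card_filter_not
    (s := Finset.powersetCard K (Finset.univ : Finset α)) (fun A => Disjoint S A)
  have e : (Finset.powersetCard K (Finset.univ : Finset α)).filter (fun A => Disjoint S A)
      = Finset.powersetCard K Sᶜ := by
    ext A
    simp only [Finset.mem_filter, Finset.mem_powersetCard, Finset.subset_univ, true_and]
    rw [and_comm, ← Finset.subset_compl_iff_disjoint_left]
  rw [e, Finset.card_powersetCard, Finset.card_powersetCard, Finset.card_compl,
    Finset.card_univ] at h
  omega



/-- Let `n ≥ 9`, `1 ≤ k ≤ 2√n/3`, `0 < ε < 1`, `G ∈ {Alt_n, Sym_n}`,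
`s ∈ G` a `k`-involution and `Z = ⌈3 log ε⁻¹⌉`.  Let `M` be the set of elements of the
conjugacy class `s^G` not commuting with `s`.  Among all `Z`-tuples of elements of `M`
(each tuple equally likely, modelling independent uniform random elements of `M`), the
proportion of tuples containing an entry `r` with `(s·r)²` a `3`-cycle is at least `1 − ε`. -/
theorem threeCycle_found_with_high_probability (n : ℕ) (hn : 9 ≤ n)
    (k : ℕ) (hk1 : 1 ≤ k) (hk2 : (k : ℝ) ≤ 2 * Real.sqrt n / 3)
    (ε : ℝ) (hε0 : 0 < ε) (hε1 : ε < 1)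
    (H : Subgroup (Equiv.Perm (Fin n))) (hH : H = ⊤ ∨ H = alternatingGroup (Fin n))
    (s : Equiv.Perm (Fin n)) (hsH : s ∈ H) (hs : orderOf s = 2)
    (hsupp : s.support.card = 2 * k)
    (Z : ℕ) (hZ : Z = ⌈3 * Real.log ε⁻¹⌉₊) :
    1 - ε ≤
      ((Finset.univ.filter
          (fun f : Fin Z →
              {r : Equiv.Perm (Fin n) // (∃ g ∈ H, r = g⁻¹ * s * g) ∧ s * r ≠ r * s} =>
            ∃ i : Fin Z, ((s * (f i : Equiv.Perm (Fin n))) ^ 2).IsThreeCycle)).card : ℝ) /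
        (Fintype.card (Fin Z →
          {r : Equiv.Perm (Fin n) // (∃ g ∈ H, r = g⁻¹ * s * g) ∧ s * r ≠ r * s}) : ℝ) := by
  have hss : ∀ x, s (s x) = x := by
    intro x
    have h := pow_orderOf_eq_one s
    rw [hs, pow_two] at h
    have := congrArg (fun f : Equiv.Perm (Fin n) => f x) h
    simpa using this
  have hs1 : s ≠ 1 := by
    rintro rfl
    simp at hs
  have hk : 9 * k ^ 2 ≤ 4 * n := by
    have h1 : (3 * (k:ℝ)) ≤ 2 * Real.sqrt n := by linarith
    have h2 : (3 * (k:ℝ))^2 ≤ (2 * Real.sqrt n)^2 := pow_le_pow_left₀ (by positivity) h1 2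
    rw [mul_pow 2, Real.sq_sqrt (by positivity)] at h2
    have : (9:ℝ) * k^2 ≤ 4 * n := by linarith
    exact_mod_cast this
  have hnum := aux_num n k hn hk1 hk
  have hF1 := aux_F1 s.support (2*k) (by omega)
  have hF2 := aux_F2 s.support (2*k)
  rw [hsupp, Fintype.card_fin] at hF1 hF2
  have hkn : 4 * k ≤ n := by
    by_cases h : k ≤ 2
    · omega
    · nlinarith
  have hch : 0 < (n - 2*k).choose (2*k-1) := Nat.choose_pos (by omega)
  have hC1 := aux_count s ((Finset.powersetCard (2*k) (Finset.univ : Finset (Fin n))).filter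
      (fun A => (s.support ∩ A).card = 1)) (by
        intro A hA
        simp only [Finset.mem_filter, Finset.mem_powersetCard] at hA
        rw [hA.1.2, hsupp])
  have hC2 := aux_count s ((Finset.powersetCard (2*k) (Finset.univ : Finset (Fin n))).filter
      (fun A => ¬ Disjoint s.support A)) (by
        intro A hA
        simp only [Finset.mem_filter, Finset.mem_powersetCard] at hA
        rw [hA.1.2, hsupp])
  have hc : 0 < (Finset.univ.filter
      (fun r : Equiv.Perm (Fin n) => IsConj s r ∧ r.support = s.support)).card :=
    Finset.card_pos.mpr ⟨s, by simpa using ⟨1, by simp⟩⟩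
  have hconj := fun r => aux_conj H hH s r hss hs1
  have hconjcard : ∀ r, IsConj s r → r.support.card = 2 * k := by
    intro r hr
    obtain ⟨c, rfl⟩ := isConj_iff.mp hr
    rw [Equiv.Perm.support_conj, Finset.card_map, hsupp]
  have hconjinv : ∀ r, IsConj s r → ∀ x, r (r x) = x := by
    intro r hr x
    obtain ⟨c, rfl⟩ := isConj_iff.mp hr
    simp [hss]
  -- upper bound on M
  have hM : Fintype.card {r : Equiv.Perm (Fin n) //
      (∃ g ∈ H, r = g⁻¹ * s * g) ∧ s * r ≠ r * s} ≤
      (Finset.univ.filter (fun r : Equiv.Perm (Fin n) => IsConj s r ∧ r.support ∈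
        (Finset.powersetCard (2*k) (Finset.univ : Finset (Fin n))).filter
      (fun A => ¬ Disjoint s.support A))).card := by
    rw [Fintype.card_subtype]
    apply Finset.card_le_card
    intro r hr
    simp only [Finset.mem_filter, Finset.mem_univ, true_and, Finset.mem_powersetCard,
      Finset.subset_univ] at hr ⊢
    rw [hconj] at hr
    refine ⟨hr.1, hconjcard r hr.1, fun hd => hr.2 ?_⟩
    exact (Equiv.Perm.disjoint_iff_disjoint_support.mpr hd).commute
  have hG : (Finset.univ.filter (fun r : Equiv.Perm (Fin n) => IsConj s r ∧ r.support ∈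
        (Finset.powersetCard (2*k) (Finset.univ : Finset (Fin n))).filter
      (fun A => (s.support ∩ A).card = 1))).card ≤
      (Finset.univ.filter (fun r : {r : Equiv.Perm (Fin n) //
      (∃ g ∈ H, r = g⁻¹ * s * g) ∧ s * r ≠ r * s} =>
        ((s * (r : Equiv.Perm (Fin n))) ^ 2).IsThreeCycle)).card := by
    rw [← Finset.card_map (Function.Embedding.subtype _)]
    apply Finset.card_le_card
    intro r hr
    simp only [Finset.mem_filter, Finset.mem_univ, true_and, Finset.mem_powersetCard,
      Finset.subset_univ] at hr
    have h3 := aux_threeCycle s r hss (hconjinv r hr.1) hr.2.2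
    have hnc : s * r ≠ r * s := by
      intro hcm
      have : (s * r)^2 = 1 := by
        ext x
        rw [pow_two]
        nth_rewrite 2 [hcm]
        simp [hss, hconjinv r hr.1]
      rw [this] at h3
      simpa using h3.orderOf
    simp only [Finset.mem_map, Finset.mem_filter, Finset.mem_univ, true_and,
      Function.Embedding.subtype_apply]
    exact ⟨⟨r, (hconj r).mpr hr.1, hnc⟩, h3, rfl⟩
  rw [hC1] at hG
  rw [hC2] at hM
  have hGpos := lt_of_lt_of_le (Nat.mul_pos (lt_of_lt_of_le
    (Nat.mul_pos (by omega : 0 < 2 * k) hch) hF1) hc) hG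
  apply aux_prob (fun r : {r : Equiv.Perm (Fin n) //
      (∃ g ∈ H, r = g⁻¹ * s * g) ∧ s * r ≠ r * s} =>
        ((s * (r : Equiv.Perm (Fin n))) ^ 2).IsThreeCycle) ?_ ?_ ε hε0 Z hZ
  · exact lt_of_lt_of_le hGpos (Finset.card_le_univ _)
  · refine le_trans (Nat.mul_le_mul_left 2 hM) (le_trans ?_ (Nat.mul_le_mul_left 7 hG))
    rw [← mul_assoc, ← mul_assoc]
    apply Nat.mul_le_mul_right
    omega
end

section
/- Let c ∈ Sym_n be a 3-cycle and r ∈ Sym_n. Then r is pre-bolstering with respect to c if and only if the following three conditions hold: [c^r, c] ≠ 1, c^{(r²)} ∉ {c, c²}, and [c, c^{(r²)}] = 1. (Here a^b := b^{−1}ab and [a,b] := a^{−1}b^{−1}ab.) -/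
/-- `r` is `k`-pre-bolstering with respect to the `3`-cycle `c` if, for some labeling
`supp c = {u,v,w}`, distinct points `a 0, …, a (α−1), b 0, …, b (β−1)` outside `supp c`
with `α, β ≥ 2` and `k = α + β + 3`, the disjoint cycle form of `r` is
`(w,u,a_1,…,a_α)(v,b_1,…,b_β)(⋯)` or `(w,u,a_1,…,a_α,v,b_1,…,b_β)(⋯)`, where `(⋯)` is an
arbitrary permutation of the remaining points. -/
def IsKPreBolstering {n : ℕ} (k : ℕ) (c r : Equiv.Perm (Fin n)) : Prop :=
  ∃ (u v w : Fin n) (α β : ℕ) (a b : ℕ → Fin n),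
    c.support = {u, v, w} ∧ 2 ≤ α ∧ 2 ≤ β ∧ k = α + β + 3 ∧
    (∀ i < α, ∀ j < α, a i = a j → i = j) ∧
    (∀ i < β, ∀ j < β, b i = b j → i = j) ∧
    (∀ i < α, ∀ j < β, a i ≠ b j) ∧
    (∀ i < α, a i ∉ c.support) ∧ (∀ j < β, b j ∉ c.support) ∧
    r w = u ∧ r u = a 0 ∧ r v = b 0 ∧
    (∀ i, i + 1 < α → r (a i) = a (i + 1)) ∧
    (∀ j, j + 1 < β → r (b j) = b (j + 1)) ∧
    ((r (a (α - 1)) = w ∧ r (b (β - 1)) = v) ∨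
     (r (a (α - 1)) = v ∧ r (b (β - 1)) = w))

/-- `r` is pre-bolstering with respect to `c` if it is `k`-pre-bolstering for some `k`. -/
def IsPreBolstering {n : ℕ} (c r : Equiv.Perm (Fin n)) : Prop :=
  ∃ k, IsKPreBolstering k c r

theorem three_cycle_at {n : ℕ} {c : Equiv.Perm (Fin n)} (hc : c.IsThreeCycle)
    (x : Fin n) (h1 : c x ≠ x) : ∃ y z, x ≠ y ∧ y ≠ z ∧ x ≠ z ∧ c x = y ∧ c y = z ∧ c z = x ∧
      ∀ t, t ≠ x → t ≠ y → t ≠ z → c t = t := by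
  have h3 := hc.card_support
  have hp : c ^ 3 = 1 := by rw [← hc.orderOf]; exact pow_orderOf_eq_one c
  have h2 : ∀ t, c (c (c t)) = t := fun t => by
    have := congrArg (fun f : Equiv.Perm (Fin n) => f t) hp
    simpa [pow_succ] using this
  have hinj := c.injective
  have e1 : c x ≠ c (c x) := fun h => h1 (hinj h).symm
  have e2 : x ≠ c (c x) := fun h => by
    have := congrArg c h
    rw [h2] at this
    exact h1 this
  refine ⟨c x, c (c x), h1.symm, e1, e2, rfl, rfl, h2 x, ?_⟩
  intro t a1 a2 a3
  by_contra ht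
  have hs : ({t, x, c x, c (c x)} : Finset (Fin n)) ⊆ c.support := by
    intro s hs
    simp only [Finset.mem_insert, Finset.mem_singleton] at hs
    rw [Equiv.Perm.mem_support]
    rcases hs with rfl | rfl | rfl | rfl
    · exact ht
    · exact h1
    · exact e1.symm
    · rw [h2]; exact e2
  have := Finset.card_le_card hs
  rw [h3, Finset.card_insert_of_notMem (by simp [a1, a2, a3]),
    Finset.card_insert_of_notMem (by simp [h1.symm, e2]),
    Finset.card_insert_of_notMem (by simp [e1])] at this
  simp at this

theorem three_cycle_form {n : ℕ} {c : Equiv.Perm (Fin n)} (hc : c.IsThreeCycle) :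
    ∃ x y z, x ≠ y ∧ y ≠ z ∧ x ≠ z ∧ c x = y ∧ c y = z ∧ c z = x ∧
      ∀ t, t ≠ x → t ≠ y → t ≠ z → c t = t := by
  have h3 := hc.card_support
  obtain ⟨x, hx⟩ : c.support.Nonempty := by
    rw [← Finset.card_pos]; omega
  exact ⟨x, three_cycle_at hc x (Equiv.Perm.mem_support.1 hx)⟩

theorem comm_cases {n : ℕ} {c d : Equiv.Perm (Fin n)} (hc : c.IsThreeCycle)
    (hd : d.IsThreeCycle) (h : ∀ t, c (d t) = d (c t)) :
    (∀ t, c t = t ∨ d t = t) ∨ d = c ∨ d = c ^ 2 := by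
  by_cases hdis : ∀ t, c t = t ∨ d t = t
  · exact Or.inl hdis
  right
  push Not at hdis
  obtain ⟨x, hs1, hs2⟩ := hdis
  obtain ⟨y, z, hxy, hyz, hxz, cx, cy, cz, cf⟩ := three_cycle_at hc x hs1
  obtain ⟨y', z', hxy', hyz', hxz', dx, dy, dz, df⟩ := three_cycle_at hd x hs2
  have hx := h x
  have hy := h y
  rw [cx] at hx
  rw [cy] at hy
  have key : d x = y ∨ d x = z := by
    by_contra hcon
    push Not at hcon
    have e := cf (d x) hs2 hcon.1 hcon.2
    rw [hx] at e
    exact hxy (d.injective e).symm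
  rcases key with k | k
  · left
    have d1 : d y = z := by rw [← hx, k, cy]
    have d2 : d z = x := by rw [← hy, d1, cz]
    have y1 : y' = y := dx.symm.trans k
    subst y1
    have z1 : z' = z := dy.symm.trans d1
    subst z1
    ext1 t
    by_cases t1 : t = x
    · rw [t1, k, cx]
    by_cases t2 : t = y'
    · rw [t2, d1, cy]
    by_cases t3 : t = z'
    · rw [t3, d2, cz]
    rw [df t t1 t2 t3, cf t t1 t2 t3]
  · right
    have d1 : d y = x := by rw [← hx, k, cz]
    have d2 : d z = y := by rw [← hy, d1, cx]
    have y1 : y' = z := dx.symm.trans k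
    subst y1
    have z1 : z' = y := dy.symm.trans d2
    subst z1
    ext1 t
    rw [pow_two, Equiv.Perm.mul_apply]
    by_cases t1 : t = x
    · rw [t1, k, cx, cy]
    by_cases t2 : t = z'
    · rw [t2, d1, cy, cz]
    by_cases t3 : t = y'
    · rw [t3, d2, cz, cx]
    rw [df t t1 t3 t2, cf t t1 t2 t3, cf t t1 t2 t3]

theorem comm_iff_pt {n : ℕ} (a b : Equiv.Perm (Fin n)) :
    a⁻¹ * b⁻¹ * a * b = 1 ↔ ∀ t, a (b t) = b (a t) := by
  have : a⁻¹ * b⁻¹ * a * b = 1 ↔ a * b = b * a := by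
    constructor
    · intro h
      calc a * b = (b * a) * (a⁻¹ * b⁻¹ * a * b) := by group
        _ = b * a := by rw [h, mul_one]
    · intro h
      rw [mul_assoc, h]; group
  rw [this, Equiv.ext_iff]
  rfl

theorem conj_three {n : ℕ} {c : Equiv.Perm (Fin n)} (hc : c.IsThreeCycle)
    (r : Equiv.Perm (Fin n)) : (r⁻¹ * c * r).IsThreeCycle := by
  have : (r⁻¹ * c * r).cycleType = c.cycleType := by
    simpa using Equiv.Perm.cycleType_conj (σ := c) (τ := r⁻¹)
  unfold Equiv.Perm.IsThreeCycle
  rw [this]; exact hc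

theorem conj_fix {n : ℕ} (c r : Equiv.Perm (Fin n)) (t : Fin n) :
    (r⁻¹ * c * r) t = t ↔ c (r t) = r t := by
  simp only [Equiv.Perm.mul_apply]
  rw [Equiv.Perm.inv_eq_iff_eq]

/-- Group conditions in terms of the support. -/
theorem cond_iff {n : ℕ} (c r : Equiv.Perm (Fin n)) (hc : c.IsThreeCycle) :
    ((r⁻¹ * c * r)⁻¹ * c⁻¹ * (r⁻¹ * c * r) * c ≠ 1 ∧
       ((r ^ 2)⁻¹ * c * r ^ 2 ≠ c ∧ (r ^ 2)⁻¹ * c * r ^ 2 ≠ c ^ 2) ∧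
       c⁻¹ * ((r ^ 2)⁻¹ * c * r ^ 2)⁻¹ * c * ((r ^ 2)⁻¹ * c * r ^ 2) = 1) ↔
    (∃ s, s ∈ c.support ∧ r s ∈ c.support) ∧
      ∀ t ∈ c.support, r (r t) ∉ c.support := by
  have hp : ∀ t, (r ^ 2) t = r (r t) := fun t => by rw [pow_two]; rfl
  have hd1 := conj_three hc r
  have hd2 := conj_three hc (r ^ 2)
  have hf1 := conj_fix c r
  have hf2 := conj_fix c (r ^ 2)
  rw [Ne, comm_iff_pt, comm_iff_pt]
  generalize r⁻¹ * c * r = d at *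
  generalize (r ^ 2)⁻¹ * c * r ^ 2 = e at *
  simp only [hp] at hf2
  simp only [Equiv.Perm.mem_support]
  obtain ⟨s0, hs0⟩ : ∃ s, c s ≠ s := by
    obtain ⟨x, y, z, h, -, -, h', -⟩ := three_cycle_form hc
    exact ⟨x, by rw [h']; exact h.symm⟩
  have disj : ∀ f : Equiv.Perm (Fin n), (∀ t, c t = t ∨ f t = t) → ∀ t, c (f t) = f (c t) := by
    intro f hf t
    exact Equiv.ext_iff.1 (Equiv.Perm.Disjoint.commute (f := c) (g := f) hf) t
  have sq : ∀ t, (c ^ 2) t = t ↔ c t = t := by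
    intro t
    obtain ⟨x, y, z, hxy, hyz, hxz, cx, cy, cz, cf⟩ := three_cycle_form hc
    rw [pow_two, Equiv.Perm.mul_apply]
    grind
  constructor
  · rintro ⟨h1, ⟨h2, h3⟩, h4⟩
    constructor
    · by_contra hcon
      push Not at hcon
      apply h1
      intro t
      refine (disj d ?_ t).symm
      intro t
      by_cases ht : c t = t
      · exact Or.inl ht
      · exact Or.inr ((hf1 t).2 (hcon t ht))
    · intro t ht hn
      rcases comm_cases hc hd2 h4 with h | h | h
      · rcases h t with h | h
        · exact ht h
        · exact hn ((hf2 t).1 h)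
      · exact h2 h
      · exact h3 h
  · rintro ⟨⟨s, hs1, hs2⟩, h2⟩
    refine ⟨?_, ⟨?_, ?_⟩, ?_⟩
    · intro h
      have hcl : ∀ t, c t = t ↔ c (r t) = r t := by
        intro t
        rcases comm_cases hc hd1 (fun t => (h t).symm) with h | h | h
        · exact absurd (h s) (by rw [hf1]; tauto)
        · rw [← hf1, h]
        · rw [← hf1, h, sq]
      exact h2 s hs1 (fun h' => hs2 ((hcl (r s)).2 h'))
    · rintro rfl
      exact h2 s0 hs0 (fun h => hs0 ((hf2 s0).2 h))
    · intro he
      refine h2 s0 hs0 (fun h => hs0 ?_)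
      rw [← sq, ← he]
      exact (hf2 s0).2 h
    · apply disj
      intro t
      by_cases ht : c t = t
      · exact Or.inl ht
      · refine Or.inr ((hf2 t).2 ?_)
        have := h2 t ht
        tauto

/-- First return time to a set. -/
theorem first_return {n : ℕ} (r : Equiv.Perm (Fin n)) (S : Finset (Fin n)) (x : Fin n)
    (hx : x ∈ S) : ∃ m, 0 < m ∧ (r ^ m) x ∈ S ∧ ∀ i, 0 < i → i < m → (r ^ i) x ∉ S := by
  classical
  have hex : ∃ m, 0 < m ∧ (r ^ m) x ∈ S :=
    ⟨orderOf r, orderOf_pos r, by rw [pow_orderOf_eq_one]; exact hx⟩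
  refine ⟨Nat.find hex, (Nat.find_spec hex).1, (Nat.find_spec hex).2, ?_⟩
  intro i h0 hi h
  exact Nat.find_min hex hi ⟨h0, h⟩

/-- Orbit segments up to the first return do not meet. -/
theorem segments {n : ℕ} (r : Equiv.Perm (Fin n)) (S : Finset (Fin n)) (x y : Fin n)
    (hy : y ∈ S) (m : ℕ)
    (hm : ∀ i, 0 < i → i < m → (r ^ i) x ∉ S) (i j : ℕ) (hj : 0 < j) (hi : i ≤ m)
    (hji : j ≤ i) (h : (r ^ i) x = (r ^ j) y) : i = j ∧ x = y := by
  have e : (r ^ (i - j)) x = y := by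
    apply (r ^ j).injective
    rw [← h, ← Equiv.Perm.mul_apply, ← pow_add]
    congr 2; omega
  rcases Nat.eq_zero_or_pos (i - j) with h0 | h0
  · rw [h0] at e
    exact ⟨by omega, e⟩
  · exact absurd (e ▸ hy) (hm _ h0 (by omega))

/-- Let `c ∈ Sym_n` be a `3`-cycle.  Then `r` is pre-bolstering with
respect to `c` if and only if `[c^r, c] ≠ 1`, `c^{r²} ∉ {c, c²}` and `[c, c^{r²}] = 1`,
where `a^b = b⁻¹ab` and `[a,b] = a⁻¹b⁻¹ab`. -/
theorem isPreBolstering_iff (n : ℕ) (c r : Equiv.Perm (Fin n)) (hc : c.IsThreeCycle) :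
    IsPreBolstering c r ↔
      ((r⁻¹ * c * r)⁻¹ * c⁻¹ * (r⁻¹ * c * r) * c ≠ 1 ∧
       ((r ^ 2)⁻¹ * c * r ^ 2 ≠ c ∧ (r ^ 2)⁻¹ * c * r ^ 2 ≠ c ^ 2) ∧
       c⁻¹ * ((r ^ 2)⁻¹ * c * r ^ 2)⁻¹ * c * ((r ^ 2)⁻¹ * c * r ^ 2) = 1) := by
  rw [cond_iff c r hc]
  have h3 := hc.card_support
  constructor
  · rintro ⟨k, u, v, w, α, β, a, b, hS, hα, hβ, -, -, -, -, ha, hb, rw', ru, rv, ra, rb, -⟩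
    refine ⟨⟨w, by simp [hS], by rw [rw', hS]; simp⟩, ?_⟩
    intro t ht
    rw [hS] at ht
    simp only [Finset.mem_insert, Finset.mem_singleton] at ht
    rcases ht with rfl | rfl | rfl
    · rw [ru, ra 0 (by omega)]; exact ha _ (by omega)
    · rw [rv, rb 0 (by omega)]; exact hb _ (by omega)
    · rw [rw', ru]; exact ha _ (by omega)
  · rintro ⟨⟨w, hw, hu⟩, h2⟩
    unfold IsPreBolstering IsKPreBolstering
    generalize c.support = S at *
    obtain ⟨u, hru⟩ : ∃ u, r w = u := ⟨_, rfl⟩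
    rw [hru] at hu
    have huw : u ≠ w := by
      rintro rfl
      exact h2 u hw (by rw [hru, hru]; exact hw)
    obtain ⟨v, hv, hvu, hvw, hS⟩ : ∃ v, v ∈ S ∧ v ≠ u ∧ v ≠ w ∧ S = {u, v, w} := by
      have hlt : ({u, w} : Finset (Fin n)).card < S.card := by
        rw [h3, Finset.card_pair huw]; omega
      obtain ⟨v, hv, hv'⟩ := Finset.exists_mem_notMem_of_card_lt_card hlt
      simp only [Finset.mem_insert, Finset.mem_singleton, not_or] at hv'
      obtain ⟨hvu, hvw⟩ := hv'
      refine ⟨v, hv, hvu, hvw, (Finset.eq_of_subset_of_card_le ?_ ?_).symm⟩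
      · intro t ht
        simp only [Finset.mem_insert, Finset.mem_singleton] at ht
        rcases ht with rfl | rfl | rfl <;> assumption
      · rw [h3, Finset.card_eq_three.2 ⟨u, v, w, Ne.symm hvu, huw, hvw, rfl⟩]
    have memS : ∀ t ∈ S, t = u ∨ t = v ∨ t = w := by
      intro t ht
      rw [hS] at ht
      simpa using ht
    have ru : r u ∉ S := by
      have := h2 w hw
      rwa [hru] at this
    have rv : r v ∉ S := by
      intro h
      rcases memS _ h with h' | h' | h'
      · exact hvw (r.injective (h'.trans hru.symm))
      · exact h2 v hv (by rw [h', h']; exact hv)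
      · exact h2 v hv (by rw [h', hru]; exact hu)
    obtain ⟨p, hp0, hpS, hpm⟩ := first_return r S u hu
    obtain ⟨q, hq0, hqS, hqm⟩ := first_return r S v hv
    have big : ∀ x, x ∈ S → r x ∉ S → ∀ m, 0 < m → (r ^ m) x ∈ S → 3 ≤ m := by
      intro x hx hrx m hm hmS
      by_contra hlt
      have : m = 1 ∨ m = 2 := by omega
      rcases this with rfl | rfl
      · exact hrx (by simpa using hmS)
      · exact h2 x hx (by simpa [pow_two] using hmS)
    have hp3 := big u hu ru p hp0 hpS
    have hq3 := big v hv rv q hq0 hqS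
    have step : ∀ i x, r ((r ^ i) x) = (r ^ (i + 1)) x := by
      intro i x
      rw [pow_succ', Equiv.Perm.mul_apply]
    have cross : ∀ i j, 0 < i → 0 < j → i ≤ p → j ≤ q → (r ^ i) u ≠ (r ^ j) v := by
      intro i j hi hj hip hjq h
      rcases le_total j i with hle | hle
      · exact hvu (segments r S u v hv p hpm i j hj hip hle h).2.symm
      · exact hvu (segments r S v u hu q hqm j i hi hjq hle h.symm).2
    have inj : ∀ x ∈ S, ∀ m, (∀ i, 0 < i → i < m → (r ^ i) x ∉ S) →
        ∀ i < m - 1, ∀ j < m - 1, (r ^ (i + 1)) x = (r ^ (j + 1)) x → i = j := by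
      intro x hx m hm i hi j hj h
      rcases le_total j i with hle | hle
      · have := (segments r S x x hx m hm (i + 1) (j + 1) (by omega) (by omega) (by omega) h).1
        omega
      · have := (segments r S x x hx m hm (j + 1) (i + 1) (by omega) (by omega) (by omega)
          h.symm).1
        omega
    have notu : ∀ x m, 3 ≤ m → (∀ i, 0 < i → i < m → (r ^ i) x ∉ S) → (r ^ m) x ≠ u := by
      intro x m h3m hm h
      apply hm (m - 1) (by omega) (by omega)
      have e : (r ^ (m - 1)) x = w := by
        apply r.injective
        rw [step, hru, ← h]
        congr 2; omega
      rw [e]; exact hw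
    refine ⟨_, u, v, w, p - 1, q - 1, fun i => (r ^ (i + 1)) u, fun i => (r ^ (i + 1)) v,
      hS, by omega, by omega, rfl, inj u hu p hpm, inj v hv q hqm, ?_, ?_, ?_, hru, ?_, ?_, ?_, ?_,
      ?_⟩
    · intro i hi j hj
      exact cross _ _ (by omega) (by omega) (by omega) (by omega)
    · intro i hi
      exact hpm (i + 1) (by omega) (by omega)
    · intro i hi
      exact hqm (i + 1) (by omega) (by omega)
    · simp
    · simp
    · intro i _
      exact step _ _
    · intro i _
      exact step _ _
    · have ep : p - 1 - 1 + 1 + 1 = p := by omega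
      have eq : q - 1 - 1 + 1 + 1 = q := by omega
      simp only [step, ep, eq]
      have c1 := cross p q hp0 hq0 le_rfl le_rfl
      have n1 := notu u p hp3 hpm
      have n2 := notu v q hq3 hqm
      rcases memS _ hpS with h | h | h <;> rcases memS _ hqS with h' | h' | h'
      · exact absurd h n1
      · exact absurd h n1
      · exact absurd h n1
      · exact absurd h' n2
      · exact absurd (h.trans h'.symm) c1
      · exact Or.inr ⟨h, h'⟩
      · exact absurd h' n2
      · exact Or.inl ⟨h, h'⟩
      · exact absurd (h.trans h'.symm) c1
end

section
/- Let n and k be natural numbers with 7 ≤ k ≤ n, let G be either Alt_n or Sym_n, and let c ∈ G be a 3-cycle. Let L_{c,G}(k) denote the number of elements of G that are k-pre-bolstering with respect to c. Then L_{c,Sym_n}(k) = 12·(n−3)!·(k−6) and L_{c,Alt_n}(k) = 6·(n−3)!·(k−6). Moreover, (1/|G|)·Σ_{k=7}^{n} L_{c,G}(k) ≥ 2/(5n). -/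
open scoped Classical

section Counting
variable {ι A : Type*} [Fintype ι] [Fintype A]

lemma exists_perm_ext (f g : ι ↪ A) : ∃ σ : Equiv.Perm A, ∀ i, σ (f i) = g i := by
  let e : {x // x ∈ Set.range f} ≃ {x // x ∈ Set.range g} :=
    (Equiv.ofInjective f f.injective).symm.trans (Equiv.ofInjective g g.injective)
  refine ⟨e.extendSubtype, fun i => ?_⟩
  rw [Equiv.extendSubtype_apply_of_mem e (f i) ⟨i, rfl⟩]
  have : (⟨f i, ⟨i, rfl⟩⟩ : {x // x ∈ Set.range f}) = Equiv.ofInjective f f.injective i := rfl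
  simp only [e, Equiv.trans_apply]
  rw [this, Equiv.symm_apply_apply]
  rfl

lemma card_pairs (ρ : Equiv.Perm ι) (hne : Nonempty (ι ↪ A)) :
    (Finset.univ.filter (fun x : (ι ↪ A) × Equiv.Perm A =>
      ∀ i, x.2 (x.1 i) = x.1 (ρ i))).card = (Fintype.card A).factorial := by
  have h1 : ∀ f : ι ↪ A, Fintype.card (ι ↪ A) *
      (Finset.univ.filter (fun r : Equiv.Perm A => ∀ i, r (f i) = f (ρ i))).card
        = (Fintype.card A).factorial := by
    intro f
    have h2 : (Finset.univ : Finset (Equiv.Perm A)).card = ∑ g ∈ (Finset.univ : Finset (ι ↪ A)),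
        (Finset.univ.filter (fun r : Equiv.Perm A => f.trans r.toEmbedding = g)).card :=
      Finset.card_eq_sum_card_fiberwise (fun _ _ => Finset.mem_coe.2 (Finset.mem_univ _))
    rw [Finset.card_univ, Fintype.card_perm] at h2
    rw [h2, ← Finset.card_univ, ← smul_eq_mul, ← Finset.sum_const]
    refine Finset.sum_congr rfl fun g _ => ?_
    obtain ⟨σ, hσ⟩ := exists_perm_ext (ρ.toEmbedding.trans f) g
    refine Finset.card_bij' (fun r _ => σ * r) (fun r _ => σ⁻¹ * r) ?_ ?_ ?_ ?_
    · intro r hr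
      simp only [Finset.mem_filter, Finset.mem_univ, true_and] at hr ⊢
      ext i
      simp [hr, ← hσ]
    · intro r hr
      simp only [Finset.mem_filter, Finset.mem_univ, true_and] at hr ⊢
      intro i
      have := hσ i
      simp only [Equiv.Perm.mul_apply, Equiv.Perm.inv_eq_iff_eq]
      rw [← hr] at this
      simpa using this.symm
    · intro r _; simp
    · intro r _; simp
  have hpos : 0 < Fintype.card (ι ↪ A) := Fintype.card_pos
  apply Nat.eq_of_mul_eq_mul_left hpos
  have h3 : (Finset.univ.filter (fun x : (ι ↪ A) × Equiv.Perm A =>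
      ∀ i, x.2 (x.1 i) = x.1 (ρ i))).card = ∑ f : ι ↪ A,
      (Finset.univ.filter (fun r : Equiv.Perm A => ∀ i, r (f i) = f (ρ i))).card := by
    rw [Finset.card_filter, Fintype.sum_prod_type]
    simp only [Finset.card_filter]
  rw [h3, Finset.mul_sum, Finset.sum_congr rfl (fun f _ => h1 f)]
  simp

lemma card_pairs_triple (ρ : Equiv.Perm ι) (hne : Nonempty (ι ↪ A)) (s : Fin 3 ↪ ι)
    (t : Fin 3 ↪ A) :
    (Finset.univ.filter (fun x : (ι ↪ A) × Equiv.Perm A =>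
      (∀ j, x.1 (s j) = t j) ∧ ∀ i, x.2 (x.1 i) = x.1 (ρ i))).card
      = (Fintype.card A - 3).factorial := by
  have h0 := card_pairs (A := A) ρ hne
  have h2 := Finset.card_eq_sum_card_fiberwise
    (s := Finset.univ.filter (fun x : (ι ↪ A) × Equiv.Perm A =>
      ∀ i, x.2 (x.1 i) = x.1 (ρ i))) (t := (Finset.univ : Finset (Fin 3 ↪ A)))
    (f := fun x => s.trans x.1) (fun _ _ => Finset.mem_coe.2 (Finset.mem_univ _))
  have h3 : ∀ t' ∈ (Finset.univ : Finset (Fin 3 ↪ A)),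
      ((Finset.univ.filter (fun x : (ι ↪ A) × Equiv.Perm A =>
        ∀ i, x.2 (x.1 i) = x.1 (ρ i))).filter (fun x => s.trans x.1 = t')).card
      = (Finset.univ.filter (fun x : (ι ↪ A) × Equiv.Perm A =>
      (∀ j, x.1 (s j) = t j) ∧ ∀ i, x.2 (x.1 i) = x.1 (ρ i))).card := by
    intro t' _
    obtain ⟨σ, hσ⟩ := exists_perm_ext t' t
    refine Finset.card_bij' (fun x _ => (x.1.trans σ.toEmbedding, σ * x.2 * σ⁻¹))
      (fun x _ => (x.1.trans (σ⁻¹).toEmbedding, σ⁻¹ * x.2 * σ)) ?_ ?_ ?_ ?_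
    · rintro ⟨f, r⟩ hr
      simp only [Finset.mem_filter, Finset.mem_univ, true_and] at hr ⊢
      obtain ⟨hr, h⟩ := hr
      refine ⟨fun j => ?_, fun i => ?_⟩
      · rw [← hσ, ← h]; simp
      · simp [hr]
    · rintro ⟨f, r⟩ hr
      simp only [Finset.mem_filter, Finset.mem_univ, true_and] at hr ⊢
      obtain ⟨h, hr⟩ := hr
      refine ⟨fun i => ?_, ?_⟩
      · simp [hr]
      · ext j
        simp [h, ← hσ]
    · rintro ⟨f, r⟩ _
      refine Prod.ext ?_ ?_
      · ext i; simp
      · simp [mul_assoc]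
    · rintro ⟨f, r⟩ _
      refine Prod.ext ?_ ?_
      · ext i; simp
      · simp [mul_assoc]
  rw [Finset.sum_congr rfl h3, h0, Finset.sum_const, smul_eq_mul, Finset.card_univ,
    Fintype.card_embedding_eq, Fintype.card_fin] at h2
  have hle : 3 ≤ Fintype.card A := by
    simpa using Fintype.card_le_of_embedding t
  have h4 := Nat.factorial_mul_descFactorial hle
  have h5 : 0 < (Fintype.card A).descFactorial 3 := Nat.descFactorial_pos.2 hle
  apply Nat.eq_of_mul_eq_mul_left h5
  rw [← h2, ← h4, mul_comm]

lemma card_triples [DecidableEq A] (S : Finset A) (hS : S.card = 3) :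
    (Finset.univ.filter (fun t : Fin 3 ↪ A => ∀ j, t j ∈ S)).card = 6 := by
  have : Fintype.card (Fin 3 ↪ {x // x ∈ S}) = 6 := by
    rw [Fintype.card_embedding_eq, Fintype.card_coe, hS]; rfl
  rw [← this, ← Finset.card_univ]
  symm
  refine Finset.card_bij (fun t _ => t.trans (Function.Embedding.subtype _)) ?_ ?_ ?_
  · intro t _; simp
  · intro t _ t' _ h
    ext j
    have := DFunLike.congr_fun h j
    simpa using this
  · intro t ht
    simp only [Finset.mem_filter, Finset.mem_univ, true_and] at ht
    exact ⟨⟨fun j => ⟨t j, ht j⟩, fun i j h => t.injective (by simpa using h)⟩,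
      Finset.mem_univ _, by ext; rfl⟩

end Counting

/-- successor index map -/
def nx (k p : ℕ) (ε : Bool) (i : ℕ) : ℕ :=
  if i + 1 = p then (if ε then p else 0) else if i + 1 = k then (if ε then 0 else p) else i + 1

lemma exists_rho (k p : ℕ) (ε : Bool) (h4 : 4 ≤ p) (hp : p + 3 ≤ k) :
    ∃ ρ : Equiv.Perm (Fin k), ∀ i, (ρ i).val = nx k p ε i := by
  have hlt : ∀ i : Fin k, nx k p ε i < k := by
    intro i
    have := i.2
    unfold nx
    split_ifs <;> omega
  let g : Fin k → Fin k := fun i => ⟨nx k p ε i, hlt i⟩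
  have hg : Function.Injective g := by
    intro i j h
    have h1 : nx k p ε i = nx k p ε j := congrArg Fin.val h
    ext
    unfold nx at h1
    have := i.2
    have := j.2
    split_ifs at h1 <;> omega
  exact ⟨Equiv.ofBijective g (Finite.injective_iff_bijective.1 hg), fun i => rfl⟩

/-- data of a pre-bolstering form -/
def FormData (n k p : ℕ) (ε : Bool) (t : Fin 3 ↪ Fin n) (f : Fin k ↪ Fin n)
    (r : Equiv.Perm (Fin n)) : Prop :=
  (∀ i : Fin k, (i.val = 0 → f i = t 0) ∧ (i.val = 1 → f i = t 1) ∧ (i.val = p → f i = t 2)) ∧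
    ∀ i j : Fin k, j.val = nx k p ε i → r (f i) = f j

lemma card_formData (n k p : ℕ) (hkn : k ≤ n) (ε : Bool) (t : Fin 3 ↪ Fin n)
    (h4 : 4 ≤ p) (hp : p + 3 ≤ k) :
    (Finset.univ.filter (fun x : (Fin k ↪ Fin n) × Equiv.Perm (Fin n) =>
      FormData n k p ε t x.1 x.2)).card = (n - 3).factorial := by
  obtain ⟨ρ, hρ⟩ := exists_rho k p ε h4 hp
  let s : Fin 3 ↪ Fin k := ⟨![⟨0, by omega⟩, ⟨1, by omega⟩, ⟨p, by omega⟩], by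
    intro i j h
    fin_cases i <;> fin_cases j <;> simp at h ⊢ <;> omega⟩
  have := card_pairs_triple (A := Fin n) ρ ⟨Fin.castLEEmb hkn⟩ s t
  rw [Fintype.card_fin] at this
  rw [← this]
  congr 1
  ext ⟨f, r⟩
  simp only [Finset.mem_filter, Finset.mem_univ, true_and]
  unfold FormData
  apply and_congr
  · constructor
    · intro h j
      fin_cases j
      · exact (h ⟨0, by omega⟩).1 rfl
      · exact (h ⟨1, by omega⟩).2.1 rfl
      · exact (h ⟨p, by omega⟩).2.2 rfl
    · intro h i
      refine ⟨fun hi => ?_, fun hi => ?_, fun hi => ?_⟩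
      · rw [← h 0]; congr 1; ext; exact hi
      · rw [← h 1]; congr 1; ext; exact hi
      · rw [← h 2]; congr 1; ext; exact hi
  · constructor
    · intro h i; exact h i _ (hρ i)
    · intro h i j hj
      rw [h i]; congr 1; ext; rw [hρ, hj]

lemma formData_swap {n k p : ℕ} {t : Fin 3 ↪ Fin n} {f : Fin k ↪ Fin n}
    {r : Equiv.Perm (Fin n)} (ε : Bool) (h4 : 4 ≤ p) (hp : p + 3 ≤ k)
    (h : FormData n k p ε t f r) :
    FormData n k p (!ε) t f (Equiv.swap (t 0) (t 2) * r) := by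
  refine ⟨h.1, fun i j hj => ?_⟩
  obtain ⟨ρ, hρ⟩ := exists_rho k p ε h4 hp
  have h1 := h.2 i (ρ i) (hρ i)
  have e0 := (h.1 ⟨0, by omega⟩).1 rfl
  have e2 := (h.1 ⟨p, by omega⟩).2.2 rfl
  rw [Equiv.Perm.mul_apply, h1, ← e0, ← e2]
  have hi := i.2
  have key : j = Equiv.swap (⟨0, by omega⟩ : Fin k) ⟨p, by omega⟩ (ρ i) := by
    have h3 := hρ i
    clear h1 hρ
    generalize ρ i = m at h3 ⊢
    rw [Equiv.swap_apply_def]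
    apply Fin.ext
    rw [hj, apply_ite Fin.val, apply_ite Fin.val]
    simp only [Fin.ext_iff, h3]
    unfold nx
    cases ε <;> grind
  rw [Function.Embedding.swap_apply, ← key]

lemma card_even (n k p : ℕ) (hkn : k ≤ n) (t : Fin 3 ↪ Fin n)
    (h4 : 4 ≤ p) (hp : p + 3 ≤ k) :
    (Finset.univ.filter (fun x : (Fin k ↪ Fin n) × Equiv.Perm (Fin n) =>
      FormData n k p true t x.1 x.2 ∧ x.2 ∈ alternatingGroup (Fin n))).card +
    (Finset.univ.filter (fun x : (Fin k ↪ Fin n) × Equiv.Perm (Fin n) =>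
      FormData n k p false t x.1 x.2 ∧ x.2 ∈ alternatingGroup (Fin n))).card
      = (n - 3).factorial := by
  rw [← card_formData n k p hkn true t h4 hp]
  have h02 : t 0 ≠ t 2 := fun h => by simpa using t.injective h
  rw [← Finset.card_filter_add_card_filter_not
    (s := Finset.univ.filter (fun x : (Fin k ↪ Fin n) × Equiv.Perm (Fin n) =>
      FormData n k p true t x.1 x.2)) (fun x => x.2 ∈ alternatingGroup (Fin n))]
  rw [Finset.filter_filter, Finset.filter_filter]
  congr 1
  refine Finset.card_bij' (fun x _ => (x.1, Equiv.swap (t 0) (t 2) * x.2))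
      (fun x _ => (x.1, Equiv.swap (t 0) (t 2) * x.2)) ?_ ?_ ?_ ?_
  · rintro ⟨f, r⟩ h
    simp only [Finset.mem_filter, Finset.mem_univ, true_and] at h ⊢
    refine ⟨formData_swap false h4 hp h.1, ?_⟩
    have := h.2
    rw [Equiv.Perm.mem_alternatingGroup] at this ⊢
    rw [Equiv.Perm.sign_mul, Equiv.Perm.sign_swap h02, this]
    decide
  · rintro ⟨f, r⟩ h
    simp only [Finset.mem_filter, Finset.mem_univ, true_and] at h ⊢
    refine ⟨formData_swap true h4 hp h.1, ?_⟩
    have := h.2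
    rw [Equiv.Perm.mem_alternatingGroup] at this ⊢
    rw [Equiv.Perm.sign_mul, Equiv.Perm.sign_swap h02]
    rcases Int.units_eq_one_or (Equiv.Perm.sign r) with h | h
    · exact absurd h this
    · rw [h]; decide
  · rintro ⟨f, r⟩ _; simp
  · rintro ⟨f, r⟩ _; simp

/-- data of a form, with the sequence indexed by natural numbers -/
def SeqForm {n : ℕ} (k p : ℕ) (ε : Bool) (S : Finset (Fin n)) (F : ℕ → Fin n)
    (r : Equiv.Perm (Fin n)) : Prop :=
  4 ≤ p ∧ p + 3 ≤ k ∧ (∀ i < k, (F i ∈ S ↔ i = 0 ∨ i = 1 ∨ i = p)) ∧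
    (∀ x ∈ S, x = F 0 ∨ x = F 1 ∨ x = F p) ∧ (∀ i < k, r (F i) = F (nx k p ε i))

lemma nx_succ {k p i : ℕ} (ε : Bool) (h1 : i + 1 ≠ p) (h2 : i + 1 ≠ k) : nx k p ε i = i + 1 := by
  simp [nx, h1, h2]

lemma seqForm_zero {n k p p' : ℕ} {ε ε' : Bool} {S : Finset (Fin n)} {F F' : ℕ → Fin n}
    {r : Equiv.Perm (Fin n)} (h : SeqForm k p ε S F r) (h' : SeqForm k p' ε' S F' r) :
    F 0 = F' 0 := by
  obtain ⟨a1, a2, a3, a4, a5⟩ := h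
  obtain ⟨b1, b2, b3, b4, b5⟩ := h'
  have e0 := a5 0 (by omega)
  rw [nx_succ ε (by omega) (by omega)] at e0
  have m0 : F 0 ∈ S := (a3 0 (by omega)).2 (by omega)
  have m1 : F 1 ∈ S := (a3 1 (by omega)).2 (by omega)
  rcases b4 _ m0 with h | h | h
  · exact h
  · exfalso
    have e1 := b5 1 (by omega)
    rw [nx_succ ε' (by omega) (by omega), ← h, e0] at e1
    rw [zero_add] at e1
    rw [e1, b3 _ (by omega)] at m1
    omega
  · exfalso
    have e1 := b5 p' (by omega)
    rw [nx_succ ε' (by omega) (by omega), ← h, e0] at e1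
    rw [zero_add] at e1
    rw [e1, b3 _ (by omega)] at m1
    omega

lemma seqForm_lt {n k p p' : ℕ} {ε ε' : Bool} {S : Finset (Fin n)} {F F' : ℕ → Fin n}
    {r : Equiv.Perm (Fin n)} (h : SeqForm k p ε S F r) (h' : SeqForm k p' ε' S F' r) :
    ∀ i, i < p → i < p' → F i = F' i := by
  have h0 := seqForm_zero h h'
  obtain ⟨a1, a2, a3, a4, a5⟩ := h
  obtain ⟨b1, b2, b3, b4, b5⟩ := h'
  intro i
  induction i with
  | zero => intro _ _; exact h0
  | succ i ih =>
    intro h1 h2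
    have e1 := a5 i (by omega)
    have e2 := b5 i (by omega)
    rw [nx_succ _ (by omega) (by omega)] at e1 e2
    rw [← e1, ← e2, ih (by omega) (by omega)]

lemma seqForm_le {n k p p' : ℕ} {ε ε' : Bool} {S : Finset (Fin n)} {F F' : ℕ → Fin n}
    {r : Equiv.Perm (Fin n)} (h : SeqForm k p ε S F r) (h' : SeqForm k p' ε' S F' r) :
    p' ≤ p := by
  by_contra hlt
  have hl := seqForm_lt h h' (p - 1) (by have := h.1; omega) (by omega)
  obtain ⟨a1, a2, a3, a4, a5⟩ := h
  obtain ⟨b1, b2, b3, b4, b5⟩ := h'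
  have e1 := a5 (p - 1) (by omega)
  have e2 := b5 (p - 1) (by omega)
  rw [nx_succ _ (by omega) (by omega), ← hl, e1] at e2
  have : F (nx k p ε (p - 1)) ∈ S := by
    have : p - 1 + 1 = p := by omega
    cases ε <;> simp only [nx, this] <;> simp <;> rw [a3 _ (by omega)] <;> simp
  rw [e2, b3 _ (by omega)] at this
  omega

lemma seqForm_unique {n k p p' : ℕ} {ε ε' : Bool} {S : Finset (Fin n)} {F F' : ℕ → Fin n}
    {r : Equiv.Perm (Fin n)} (hF : ∀ i < k, ∀ j < k, F i = F j → i = j)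
    (h : SeqForm k p ε S F r) (h' : SeqForm k p' ε' S F' r) :
    p = p' ∧ ε = ε' ∧ ∀ i < k, F i = F' i := by
  have hp : p = p' := le_antisymm (seqForm_le h' h) (seqForm_le h h')
  subst hp
  have hl := seqForm_lt h h'
  obtain ⟨a1, a2, a3, a4, a5⟩ := h
  obtain ⟨b1, b2, b3, b4, b5⟩ := h'
  have hl0 := hl 0 (by omega) (by omega)
  have hl1 := hl 1 (by omega) (by omega)
  have hlp : F p = F' p := by
    have mp : F p ∈ S := (a3 p (by omega)).2 (by omega)
    rcases b4 _ mp with h | h | h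
    · rw [← hl0] at h
      have := hF _ (by omega) _ (by omega) h
      omega
    · rw [← hl1] at h
      have := hF _ (by omega) _ (by omega) h
      omega
    · exact h
  have hge : ∀ i, p + i < k → F (p + i) = F' (p + i) := by
    intro i
    induction i with
    | zero => intro _; exact hlp
    | succ i ih =>
      intro h1
      have e1 := a5 (p + i) (by omega)
      have e2 := b5 (p + i) (by omega)
      rw [nx_succ _ (by omega) (by omega)] at e1 e2
      rw [← add_assoc, ← e1, ← e2, ih (by omega)]
  refine ⟨rfl, ?_, ?_⟩
  · have e1 := a5 (p - 1) (by omega)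
    have e2 := b5 (p - 1) (by omega)
    rw [hl (p - 1) (by omega) (by omega), e2] at e1
    have h3 : p - 1 + 1 = p := by omega
    have hne : F 0 ≠ F p := fun h => by
      have := hF _ (by omega) _ (by omega) h
      omega
    cases ε <;> cases ε' <;> simp [nx, h3, ← hl0, ← hlp, hne, hne.symm] at e1 ⊢
  · intro i hi
    by_cases h : i < p
    · exact hl i h h
    · obtain ⟨j, rfl⟩ := Nat.exists_eq_add_of_le (not_lt.1 h)
      exact hge j hi

lemma finset_three {n : ℕ} {S : Finset (Fin n)} (hS : S.card = 3) {t : Fin 3 ↪ Fin n}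
    (ht : ∀ j, t j ∈ S) : S = {t 0, t 1, t 2} := by
  symm
  apply Finset.eq_of_subset_of_card_le
  · intro x hx
    simp only [Finset.mem_insert, Finset.mem_singleton] at hx
    rcases hx with rfl | rfl | rfl <;> apply ht
  · rw [hS, Finset.card_eq_three.2 ⟨t 0, t 1, t 2, ?_, ?_, ?_, rfl⟩] <;>
    · intro h
      simpa using t.injective h

lemma seqForm_of_formData {n k p : ℕ} {ε : Bool} {S : Finset (Fin n)} (hS : S.card = 3)
    {t : Fin 3 ↪ Fin n} (ht : ∀ j, t j ∈ S)
    {f : Fin k ↪ Fin n} {r : Equiv.Perm (Fin n)} (h4 : 4 ≤ p) (hp : p + 3 ≤ k)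
    (h : FormData n k p ε t f r) :
    ∃ F : ℕ → Fin n, (∀ i : Fin k, F i = f i) ∧ (∀ i < k, ∀ j < k, F i = F j → i = j) ∧
      F 0 = t 0 ∧ F 1 = t 1 ∧ F p = t 2 ∧ SeqForm k p ε S F r := by
  have hS3 := finset_three hS ht
  obtain ⟨ρ, hρ⟩ := exists_rho k p ε h4 hp
  let F : ℕ → Fin n := fun i => if h : i < k then f ⟨i, h⟩ else f ⟨0, by omega⟩
  have hFf : ∀ i : Fin k, F i = f i := fun i => by simp [F]
  have hinj : ∀ i < k, ∀ j < k, F i = F j → i = j := by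
    intro i hi j hj hij
    simp only [F, hi, hj, dif_pos] at hij
    simpa using f.injective hij
  have h0 : F 0 = t 0 := by
    rw [← (h.1 ⟨0, by omega⟩).1 rfl, ← hFf]
  have h1 : F 1 = t 1 := by
    rw [← (h.1 ⟨1, by omega⟩).2.1 rfl, ← hFf]
  have h2 : F p = t 2 := by
    rw [← (h.1 ⟨p, by omega⟩).2.2 rfl, ← hFf]
  refine ⟨F, hFf, hinj, h0, h1, h2, h4, hp, ?_, ?_, ?_⟩
  · intro i hi
    rw [hS3]
    simp only [Finset.mem_insert, Finset.mem_singleton]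
    rw [← h0, ← h1, ← h2]
    constructor
    · rintro (h | h | h)
      · exact Or.inl (hinj _ hi _ (by omega) h)
      · exact Or.inr (Or.inl (hinj _ hi _ (by omega) h))
      · exact Or.inr (Or.inr (hinj _ hi _ (by omega) h))
    · rintro (h | h | h) <;> simp [h]
  · intro x hx
    rw [hS3] at hx
    simpa [h0, h1, h2] using hx
  · intro i hi
    have := h.2 ⟨i, hi⟩ _ (hρ _)
    rw [← hFf, ← hFf, hρ] at this
    exact this

lemma three_distinct {n : ℕ} {u v w : Fin n} (h : ({u, v, w} : Finset (Fin n)).card = 3) :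
    u ≠ v ∧ u ≠ w ∧ v ≠ w := by
  refine ⟨?_, ?_, ?_⟩
  · rintro rfl
    have := (Finset.card_le_two : ({u, w} : Finset (Fin n)).card ≤ 2)
    simp_all
  · rintro rfl
    have := (Finset.card_le_two : ({v, u} : Finset (Fin n)).card ≤ 2)
    simp_all
  · rintro rfl
    have := (Finset.card_le_two : ({u, v} : Finset (Fin n)).card ≤ 2)
    simp_all

set_option maxHeartbeats 2000000 in
lemma preB_iff {n k : ℕ} {c r : Equiv.Perm (Fin n)} (hc : c.support.card = 3) :
    IsKPreBolstering k c r ↔ ∃ (ε : Bool) (p : ℕ) (t : Fin 3 ↪ Fin n) (f : Fin k ↪ Fin n),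
      4 ≤ p ∧ p + 3 ≤ k ∧ (∀ j, t j ∈ c.support) ∧ FormData n k p ε t f r := by
  constructor
  · rintro ⟨u, v, w, α, β, a, b, hS, hα, hβ, hk, ha, hb, hab, haS, hbS, rw0, ru, rv, ra, rb, hor⟩
    have huvw : u ≠ v ∧ u ≠ w ∧ v ≠ w := three_distinct (hS ▸ hc)
    obtain ⟨huv, huw, hvw⟩ := huvw
    have haS' : ∀ i < α, a i ≠ u ∧ a i ≠ v ∧ a i ≠ w := by
      intro i hi
      simpa [hS] using haS i hi
    have hbS' : ∀ i < β, b i ≠ u ∧ b i ≠ v ∧ b i ≠ w := by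
      intro i hi
      simpa [hS] using hbS i hi
    let F : ℕ → Fin n := fun i => if i = 0 then w else if i = 1 then u else
      if i < α + 2 then a (i - 2) else if i = α + 2 then v else b (i - (α + 3))
    have F0 : F 0 = w := by simp [F]
    have F1 : F 1 = u := by simp [F]
    have Fa : ∀ i < α, F (i + 2) = a i := by
      intro i hi; simp [F, hi]
    have Fp : F (α + 2) = v := by simp [F]
    have Fb : ∀ i, F (α + 3 + i) = b i := by
      intro i
      have h1 : α + 3 + i ≠ 1 := by omega
      have h2 : ¬ α + 3 + i < α + 2 := by omega
      have h3 : α + 3 + i ≠ α + 2 := by omega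
      simp [F, h1, h2, h3]
    have cases_i : ∀ i < k, i = 0 ∨ i = 1 ∨ (∃ j < α, i = j + 2) ∨ i = α + 2 ∨
        ∃ j < β, i = α + 3 + j := by
      intro i hi
      by_cases h0 : i < 2
      · omega
      by_cases h1 : i < α + 2
      · exact Or.inr (Or.inr (Or.inl ⟨i - 2, by omega, by omega⟩))
      by_cases h2 : i = α + 2
      · omega
      exact Or.inr (Or.inr (Or.inr (Or.inr ⟨i - (α + 3), by omega, by omega⟩)))
    have hinj : ∀ i < k, ∀ j < k, F i = F j → i = j := by
      intro i hi j hj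
      rcases cases_i i hi with rfl | rfl | ⟨i, hi, rfl⟩ | rfl | ⟨i, hi, rfl⟩ <;>
      rcases cases_i j hj with rfl | rfl | ⟨j, hj, rfl⟩ | rfl | ⟨j, hj, rfl⟩ <;>
      clear_value F <;> clear ra rb hor rw0 ru rv <;> grind
    have hor' : ∃ ε : Bool, r (a (α - 1)) = F (nx k (α + 2) ε (α + 1)) ∧
        r (b (β - 1)) = F (nx k (α + 2) ε (k - 1)) := by
      have e1 : k - 1 + 1 = k := by omega
      have e2 : k ≠ α + 2 := by omega
      rcases hor with h | h
      · refine ⟨false, ?_⟩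
        simp [nx, F0, Fp, h, e1, e2]
      · refine ⟨true, ?_⟩
        simp [nx, F0, Fp, h, e1, e2]
    obtain ⟨ε, hε1, hε2⟩ := hor'
    let f : Fin k ↪ Fin n := ⟨fun i => F i, fun i j h => Fin.ext (hinj _ i.2 _ j.2 h)⟩
    let t : Fin 3 ↪ Fin n := ⟨![w, u, v], by
      intro i j h
      fin_cases i <;> fin_cases j <;> simp at h ⊢ <;> grind⟩
    refine ⟨ε, α + 2, t, f, by omega, by omega, ?_, ?_, ?_⟩
    · intro j
      rw [hS]
      fin_cases j
      · change w ∈ _; simp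
      · change u ∈ _; simp
      · change v ∈ _; simp
    · rintro ⟨i, hi⟩
      refine ⟨fun h => ?_, fun h => ?_, fun h => ?_⟩
      · simp only at h; subst h; exact F0
      · simp only at h; subst h; exact F1
      · simp only at h; subst h; exact Fp
    · rintro ⟨i, hi⟩ ⟨j, hj⟩ h
      simp only at h
      subst h
      change r (F i) = F (nx k (α + 2) ε i)
      rcases cases_i i hi with rfl | rfl | ⟨i, hi', rfl⟩ | rfl | ⟨i, hi', rfl⟩
      · rw [nx_succ _ (by omega) (by omega), F0, rw0, F1]
      · rw [nx_succ _ (by omega) (by omega), F1, ru, ← Fa 0 (by omega)]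
      · by_cases hl : i + 1 < α
        · rw [nx_succ _ (by omega) (by omega), Fa _ hi', ra i hl, ← Fa _ hl]
        · have : i = α - 1 := by omega
          rw [Fa _ hi', this, hε1]
          congr 2; omega
      · rw [nx_succ _ (by omega) (by omega), Fp, rv, ← Fb 0]
      · by_cases hl : i + 1 < β
        · rw [nx_succ _ (by omega) (by omega), Fb, rb i hl, ← Fb]
          congr 1
        · have : i = β - 1 := by omega
          rw [Fb, this, hε2]
          congr 2; omega
  · rintro ⟨ε, p, t, f, h4, hp, ht, h⟩
    obtain ⟨F, hFf, hinj, h0, h1, h2, -, -, hmem, -, hr⟩ := seqForm_of_formData hc ht h4 hp h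
    have hS := finset_three hc ht
    refine ⟨t 1, t 2, t 0, p - 2, k - 1 - p, fun i => F (i + 2), fun j => F (p + 1 + j),
      ?_, by omega, by omega, by omega, ?_, ?_, ?_, ?_, ?_, ?_, ?_, ?_, ?_, ?_, ?_⟩
    · rw [hS]; ext x; simp; tauto
    · intro i hi j hj hij
      have := hinj _ (by omega) _ (by omega) hij
      omega
    · intro i hi j hj hij
      have := hinj _ (by omega) _ (by omega) hij
      omega
    · intro i hi j hj hij
      have := hinj _ (by omega) _ (by omega) hij
      omega
    · intro i hi
      rw [hmem _ (by omega)]; omega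
    · intro i hi
      rw [hmem _ (by omega)]; omega
    · rw [← h0, ← h1, hr _ (by omega), nx_succ _ (by omega) (by omega)]
    · rw [← h1, hr _ (by omega), nx_succ _ (by omega) (by omega)]
    · rw [← h2, hr _ (by omega), nx_succ _ (by omega) (by omega)]
    · intro i hi
      simp only
      rw [hr _ (by omega), nx_succ _ (by omega) (by omega)]
    · intro i hi
      simp only
      rw [hr _ (by omega), nx_succ _ (by omega) (by omega)]
      congr 1
    · simp only
      rw [hr _ (by omega), hr _ (by omega)]
      have e1 : p - 2 - 1 + 2 + 1 = p := by omega
      have e2 : p + 1 + (k - 1 - p - 1) + 1 = k := by omega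
      have e3 : k ≠ p := by omega
      cases ε
      · left; simp [nx, e1, e2, e3, h0, h2]
      · right; simp [nx, e1, e2, e3, h0, h2]

lemma card_preB {n k : ℕ} {c : Equiv.Perm (Fin n)} (hc : c.support.card = 3)
    (Q : Equiv.Perm (Fin n) → Prop) :
    (Finset.univ.filter (fun r : Equiv.Perm (Fin n) => Q r ∧ IsKPreBolstering k c r)).card =
    ∑ p ∈ Finset.Icc 4 (k - 3),
      ∑ t ∈ Finset.univ.filter (fun t : Fin 3 ↪ Fin n => ∀ j, t j ∈ c.support),
      ((Finset.univ.filter (fun x : (Fin k ↪ Fin n) × Equiv.Perm (Fin n) =>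
        FormData n k p true t x.1 x.2 ∧ Q x.2)).card +
      (Finset.univ.filter (fun x : (Fin k ↪ Fin n) × Equiv.Perm (Fin n) =>
        FormData n k p false t x.1 x.2 ∧ Q x.2)).card) := by
  have h1 : ∀ p t, ((Finset.univ.filter (fun x : (Fin k ↪ Fin n) × Equiv.Perm (Fin n) =>
        FormData n k p true t x.1 x.2 ∧ Q x.2)).card +
      (Finset.univ.filter (fun x : (Fin k ↪ Fin n) × Equiv.Perm (Fin n) =>
        FormData n k p false t x.1 x.2 ∧ Q x.2)).card) = ∑ ε : Bool,
        (Finset.univ.filter (fun x : (Fin k ↪ Fin n) × Equiv.Perm (Fin n) =>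
        FormData n k p ε t x.1 x.2 ∧ Q x.2)).card := by
    intro p t
    rw [Fintype.sum_bool]
  simp only [h1]
  simp only [← Finset.card_sigma]
  symm
  refine Finset.card_bij (fun x _ => x.2.2.2.2) ?_ ?_ ?_
  · rintro ⟨p, t, ε, f, r⟩ h
    simp only [Finset.mem_sigma, Finset.mem_filter, Finset.mem_univ, true_and,
      Finset.mem_Icc] at h ⊢
    obtain ⟨⟨h4, hp⟩, ht, h, hQ⟩ := h
    exact ⟨hQ, (preB_iff hc).2 ⟨ε, p, t, f, h4, by omega, ht, h⟩⟩
  · rintro ⟨p, t, ε, f, r⟩ h ⟨p', t', ε', f', r'⟩ h' hr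
    simp only [Finset.mem_sigma, Finset.mem_filter, Finset.mem_univ, true_and,
      Finset.mem_Icc] at h h' hr
    subst hr
    obtain ⟨⟨h4, hp⟩, ht, h, hQ⟩ := h
    obtain ⟨⟨h4', hp'⟩, ht', h', hQ'⟩ := h'
    obtain ⟨F, hFf, hinj, h0, h1, h2, hs⟩ :=
      seqForm_of_formData hc ht h4 (by omega) h
    obtain ⟨F', hFf', hinj', h0', h1', h2', hs'⟩ :=
      seqForm_of_formData hc ht' h4' (by omega) h'
    obtain ⟨rfl, rfl, hF⟩ := seqForm_unique hinj hs hs'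
    have hf : f = f' := by
      ext i
      rw [← hFf, ← hFf', hF _ i.2]
    have htt : t = t' := by
      ext j
      fin_cases j
      · simp [← h0, ← h0', hF 0 (by omega)]
      · simp [← h1, ← h1', hF 1 (by omega)]
      · simp [← h2, ← h2', hF p (by omega)]
    subst hf htt
    rfl
  · intro r hr
    simp only [Finset.mem_filter, Finset.mem_univ, true_and] at hr
    obtain ⟨ε, p, t, f, h4, hp, ht, h⟩ := (preB_iff hc).1 hr.2
    refine ⟨⟨p, t, ε, f, r⟩, ?_, rfl⟩
    simp only [Finset.mem_sigma, Finset.mem_filter, Finset.mem_univ, true_and,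
      Finset.mem_Icc]
    exact ⟨⟨h4, by omega⟩, ht, h, hr.1⟩

lemma card_sym {n k : ℕ} (hk : 7 ≤ k) (hkn : k ≤ n) {c : Equiv.Perm (Fin n)}
    (hc : c.support.card = 3) :
    (Finset.univ.filter (fun r : Equiv.Perm (Fin n) => IsKPreBolstering k c r)).card
        = 12 * (n - 3).factorial * (k - 6) := by
  have h := card_preB (k := k) hc (fun _ => True)
  simp only [true_and, and_true] at h
  rw [h]
  have h2 : ∀ p ∈ Finset.Icc 4 (k - 3),
      ∑ t ∈ Finset.univ.filter (fun t : Fin 3 ↪ Fin n => ∀ j, t j ∈ c.support),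
      ((Finset.univ.filter (fun x : (Fin k ↪ Fin n) × Equiv.Perm (Fin n) =>
        FormData n k p true t x.1 x.2)).card +
      (Finset.univ.filter (fun x : (Fin k ↪ Fin n) × Equiv.Perm (Fin n) =>
        FormData n k p false t x.1 x.2)).card) =
      ∑ t ∈ Finset.univ.filter (fun t : Fin 3 ↪ Fin n => ∀ j, t j ∈ c.support),
        ((n - 3).factorial + (n - 3).factorial) := by
    intro p hp
    rw [Finset.mem_Icc] at hp
    refine Finset.sum_congr rfl fun t _ => ?_
    rw [card_formData n k p hkn true t hp.1 (by omega),
      card_formData n k p hkn false t hp.1 (by omega)]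
  rw [Finset.sum_congr rfl h2]
  rw [Finset.sum_const, Finset.sum_const, card_triples _ hc, Nat.card_Icc,
    show k - 3 + 1 - 4 = k - 6 by omega]
  simp only [smul_eq_mul]
  ring

lemma card_alt {n k : ℕ} (hk : 7 ≤ k) (hkn : k ≤ n) {c : Equiv.Perm (Fin n)}
    (hc : c.support.card = 3) :
    (Finset.univ.filter (fun r : Equiv.Perm (Fin n) =>
      r ∈ alternatingGroup (Fin n) ∧ IsKPreBolstering k c r)).card
        = 6 * (n - 3).factorial * (k - 6) := by
  have h := card_preB (k := k) hc (fun r => r ∈ alternatingGroup (Fin n))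
  rw [h]
  have h2 : ∀ p ∈ Finset.Icc 4 (k - 3),
      ∑ t ∈ Finset.univ.filter (fun t : Fin 3 ↪ Fin n => ∀ j, t j ∈ c.support),
      ((Finset.univ.filter (fun x : (Fin k ↪ Fin n) × Equiv.Perm (Fin n) =>
        FormData n k p true t x.1 x.2 ∧ x.2 ∈ alternatingGroup (Fin n))).card +
      (Finset.univ.filter (fun x : (Fin k ↪ Fin n) × Equiv.Perm (Fin n) =>
        FormData n k p false t x.1 x.2 ∧ x.2 ∈ alternatingGroup (Fin n))).card) =
      ∑ t ∈ Finset.univ.filter (fun t : Fin 3 ↪ Fin n => ∀ j, t j ∈ c.support),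
        (n - 3).factorial := by
    intro p hp
    rw [Finset.mem_Icc] at hp
    refine Finset.sum_congr rfl fun t _ => ?_
    exact card_even n k p hkn t hp.1 (by omega)
  rw [Finset.sum_congr rfl h2]
  rw [Finset.sum_const, Finset.sum_const, card_triples _ hc, Nat.card_Icc,
    show k - 3 + 1 - 4 = k - 6 by omega]
  simp only [smul_eq_mul]
  ring

lemma sum_sub_six (n : ℕ) (hn : 6 ≤ n) :
    ∑ j ∈ Finset.Icc 7 n, ((j - 6 : ℕ) : ℝ) = ((n : ℝ) - 6) * (n - 5) / 2 := by
  induction n, hn using Nat.le_induction with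
  | base => norm_num
  | succ m hm ih =>
    rw [Finset.sum_Icc_succ_top (by omega), ih, Nat.cast_sub (by omega)]
    push_cast
    ring

lemma final_bound (n : ℕ) (hn : 7 ≤ n) (C : ℝ) (hC : C = (n.factorial : ℝ)) :
    2 / (5 * (n : ℝ)) ≤ (12 * ((n - 3).factorial : ℝ) * (((n : ℝ) - 6) * (n - 5) / 2)) / C := by
  have hn' : (7 : ℝ) ≤ n := by exact_mod_cast hn
  have hf : (n.factorial : ℝ) = n * (n - 1) * (n - 2) * ((n - 3).factorial : ℝ) := by
    obtain ⟨m, rfl⟩ := Nat.exists_eq_add_of_le (show 3 ≤ n by omega)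
    rw [show 3 + m - 3 = m by omega, show 3 + m = m + 1 + 1 + 1 by omega]
    simp only [Nat.factorial_succ]
    push_cast
    ring
  have hpos : (0 : ℝ) < ((n - 3).factorial : ℝ) := by exact_mod_cast Nat.factorial_pos _
  rw [hC, hf]
  rw [div_le_div_iff₀ (by positivity) (by
    have : (0 : ℝ) < n - 1 := by linarith
    have : (0 : ℝ) < n - 2 := by linarith
    positivity)]
  have key : 0 ≤ (n : ℝ) * ((n - 3).factorial : ℝ) * ((n - 7) * (n - 4)) := by
    have : (0 : ℝ) ≤ n - 7 := by linarith
    have : (0 : ℝ) ≤ n - 4 := by linarith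
    positivity
  have key2 : 0 ≤ (n : ℝ) * ((n - 3).factorial : ℝ) * ((n - 7)) := by
    have : (0 : ℝ) ≤ n - 7 := by linarith
    positivity
  nlinarith [key, key2]

/-- For `7 ≤ k ≤ n`, `G ∈ {Alt_n, Sym_n}` and a `3`-cycle `c ∈ G`:
`L_{c,Sym_n}(k) = 12·(n−3)!·(k−6)`, `L_{c,Alt_n}(k) = 6·(n−3)!·(k−6)`, and
`(1/|G|)·Σ_{j=7}^{n} L_{c,G}(j) ≥ 2/(5n)`. -/
theorem preBolstering_counts (n k : ℕ) (hk : 7 ≤ k) (hkn : k ≤ n)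
    (H : Subgroup (Equiv.Perm (Fin n))) (hH : H = ⊤ ∨ H = alternatingGroup (Fin n))
    (c : Equiv.Perm (Fin n)) (hcH : c ∈ H) (hc : c.IsThreeCycle) :
    (Finset.univ.filter (fun r : Equiv.Perm (Fin n) => IsKPreBolstering k c r)).card
        = 12 * (n - 3).factorial * (k - 6) ∧
    (Finset.univ.filter (fun r : Equiv.Perm (Fin n) =>
        r ∈ alternatingGroup (Fin n) ∧ IsKPreBolstering k c r)).card
        = 6 * (n - 3).factorial * (k - 6) ∧
    2 / (5 * (n : ℝ)) ≤
      (∑ j ∈ Finset.Icc 7 n,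
        ((Finset.univ.filter (fun r : Equiv.Perm (Fin n) =>
          r ∈ H ∧ IsKPreBolstering j c r)).card : ℝ)) / (Fintype.card H : ℝ) := by
  have hc3 : c.support.card = 3 := hc.card_support
  refine ⟨card_sym hk hkn hc3, card_alt hk hkn hc3, ?_⟩
  have hn : 7 ≤ n := hk.trans hkn
  rcases hH with rfl | rfl
  · have hs : (∑ j ∈ Finset.Icc 7 n, ((Finset.univ.filter (fun r : Equiv.Perm (Fin n) =>
          r ∈ (⊤ : Subgroup (Equiv.Perm (Fin n))) ∧ IsKPreBolstering j c r)).card : ℝ)) =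
        12 * ((n - 3).factorial : ℝ) * (((n : ℝ) - 6) * (n - 5) / 2) := by
      rw [← sum_sub_six n (by omega), Finset.mul_sum]
      refine Finset.sum_congr rfl fun j hj => ?_
      rw [Finset.mem_Icc] at hj
      have := card_sym hj.1 hj.2 hc3
      simp only [Subgroup.mem_top, true_and]
      rw [this]
      push_cast
      ring
    rw [hs]
    apply final_bound n hn
    rw [← Nat.card_eq_fintype_card, Subgroup.card_top, Nat.card_perm, Nat.card_fin]
  · have hs : (∑ j ∈ Finset.Icc 7 n, ((Finset.univ.filter (fun r : Equiv.Perm (Fin n) =>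
          r ∈ alternatingGroup (Fin n) ∧ IsKPreBolstering j c r)).card : ℝ)) =
        (12 * ((n - 3).factorial : ℝ) * (((n : ℝ) - 6) * (n - 5) / 2)) / 2 := by
      rw [← sum_sub_six n (by omega), Finset.mul_sum, Finset.sum_div]
      refine Finset.sum_congr rfl fun j hj => ?_
      rw [Finset.mem_Icc] at hj
      rw [card_alt hj.1 hj.2 hc3]
      push_cast
      ring
    rw [hs, div_div]
    apply final_bound n hn
    have : Nontrivial (Fin n) := Fin.nontrivial_iff_two_le.2 (by omega)
    have h2 := two_mul_nat_card_alternatingGroup (α := Fin n)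
    rw [Nat.card_perm, Nat.card_fin] at h2
    have h3 : ∀ inst : Fintype (alternatingGroup (Fin n)),
        @Fintype.card (alternatingGroup (Fin n)) inst = Nat.card (alternatingGroup (Fin n)) :=
      fun inst => (@Nat.card_eq_fintype_card _ inst).symm
    rw [h3, mul_comm]
    rw [mul_comm] at h2
    exact_mod_cast h2
end

section
/- Let n ≥ 7 be a natural number, G either Alt_n or Sym_n, c ∈ G a 3-cycle, 0 < ε < 1, and 1/2 < α ≤ 4/5. Set S := ⌈ 5n · max( (25/18)·⌈(1/2)·log_α(ε)⌉, (5/4)⁴·log(ε^{−1}) ) ⌉, where log is the natural logarithm and log_α(ε) = log(ε)/log(α). If x_1, …, x_S are independent, uniformly distributed random elements of G, then with probability at least 1 − ε at least ⌈(1/2)·log_α(ε)⌉ of the x_i are k-pre-bolstering with respect to c for some k with 7 ≤ k ≤ n. -/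
open scoped Classical

/-- the point `i` of `Fin n` (index reduced modulo `n`) -/
def ptIdx {n : ℕ} (hn : 7 ≤ n) (i : ℕ) : Fin n := ⟨i % n, Nat.mod_lt _ (by omega)⟩

theorem ptIdx_inj {n : ℕ} (hn : 7 ≤ n) {i j : ℕ} (hi : i < n) (hj : j < n)
    (h : ptIdx hn i = ptIdx hn j) : i = j := by
  have := congrArg Fin.val h
  simpa [ptIdx, Nat.mod_eq_of_lt hi, Nat.mod_eq_of_lt hj] using this

theorem exists_rot {n : ℕ} (hn : 7 ≤ n) (k : ℕ) (hk : 7 ≤ k) (hkn : k ≤ n) :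
    ∃ rot : Equiv.Perm (Fin n), (∀ i, i + 1 < k → rot (ptIdx hn i) = ptIdx hn (i + 1)) ∧
      rot (ptIdx hn (k - 1)) = ptIdx hn 0 := by
  have : NeZero n := ⟨by omega⟩
  refine ⟨Fin.cycleRange (ptIdx hn (k - 1)), ?_, ?_⟩
  · intro i hi
    have hlt : ptIdx hn i < ptIdx hn (k - 1) := by
      rw [Fin.lt_def]
      simp only [ptIdx]
      rw [Nat.mod_eq_of_lt (by omega), Nat.mod_eq_of_lt (by omega)]
      omega
    apply Fin.ext
    rw [Fin.coe_cycleRange_of_lt hlt]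
    simp only [ptIdx]
    rw [Nat.mod_eq_of_lt (by omega), Nat.mod_eq_of_lt (by omega)]
  · rw [Fin.cycleRange_self]
    apply Fin.ext
    simp [ptIdx]

/-- Path data: `G 0 = w, G 1 = u, G (2..α+1) = a, G (α+2) = v, G (α+3 .. α+β+2) = b`. -/
structure PathData {n : ℕ} (s : Finset (Fin n)) (α β : ℕ) (G : ℕ → Fin n)
    (r : Equiv.Perm (Fin n)) : Prop where
  hα : 2 ≤ α
  hβ : 2 ≤ β
  hs : s = {G 1, G (α + 2), G 0}
  inj : ∀ i < α + β + 3, ∀ j < α + β + 3, G i = G j → i = j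
  step1 : ∀ i < α + 1, r (G i) = G (i + 1)
  step2 : ∀ j, j < β → r (G (α + 2 + j)) = G (α + 2 + (j + 1))
  last : (r (G (α + 1)) = G 0 ∧ r (G (α + β + 2)) = G (α + 2)) ∨
    (r (G (α + 1)) = G (α + 2) ∧ r (G (α + β + 2)) = G 0)

namespace PathData
variable {n : ℕ} {s : Finset (Fin n)} {α β α' β' : ℕ} {G G' : ℕ → Fin n}
  {r : Equiv.Perm (Fin n)}

theorem notMem (h : PathData s α β G r) {i : ℕ} (hi : i < α + β + 3) (h2 : 2 ≤ i)
    (h3 : i ≠ α + 2) : G i ∉ s := by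
  rw [h.hs]
  simp only [Finset.mem_insert, Finset.mem_singleton, not_or]
  refine ⟨fun e => ?_, fun e => ?_, fun e => ?_⟩
  · have := h.inj _ hi _ (by omega) e; omega
  · have := h.inj _ hi _ (by omega) e; omega
  · have := h.inj _ hi _ (by omega) e; omega

theorem mem (h : PathData s α β G r) {x : Fin n} : x ∈ s ↔ x = G 1 ∨ x = G (α + 2) ∨ x = G 0 := by
  rw [h.hs]; simp

theorem last1 (h : PathData s α β G r) : r (G (α + 1)) ∈ s := by
  rw [h.mem]; rcases h.last with h | h <;> simp [h.1]

theorem last2 (h : PathData s α β G r) : r (G (α + β + 2)) ∈ s := by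
  rw [h.mem]; rcases h.last with h | h <;> simp [h.2]

theorem toPre {c : Equiv.Perm (Fin n)} (h : PathData c.support α β G r) :
    IsKPreBolstering (α + β + 3) c r := by
  have hα := h.hα
  have hβ := h.hβ
  refine ⟨G 1, G (α + 2), G 0, α, β, fun i => G (2 + i), fun j => G (α + 2 + (j + 1)), h.hs,
    hα, hβ, rfl, ?_, ?_, ?_, ?_, ?_, h.step1 0 (by omega), h.step1 1 (by omega),
    h.step2 0 (by omega), ?_, ?_, ?_⟩
  · intro i hi j hj e
    have := h.inj _ (by omega) _ (by omega) e; omega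
  · intro i hi j hj e
    have := h.inj _ (by omega) _ (by omega) e; omega
  · intro i hi j hj e
    have := h.inj _ (by omega) _ (by omega) e; omega
  · intro i hi
    exact h.notMem (by omega) (by omega) (by omega)
  · intro i hi
    exact h.notMem (by omega) (by omega) (by omega)
  · intro i hi
    exact h.step1 (2 + i) (by omega)
  · intro j hj
    exact h.step2 (j + 1) (by omega)
  · have e1 : 2 + (α - 1) = α + 1 := by omega
    have e2 : α + 2 + (β - 1 + 1) = α + β + 2 := by omega
    simp only [e1, e2]
    exact h.last

theorem G0 (h : PathData s α β G r) (h' : PathData s α' β' G' r) : G 0 = G' 0 := by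
  have hα := h.hα
  have hβ := h.hβ
  have h1 : G' 0 ∈ s := by rw [h'.mem]; simp
  have h2 : r (G' 0) ∈ s := by rw [h'.step1 0 (by omega), h'.mem]; simp
  rcases h.mem.1 h1 with e | e | e
  · rw [e, h.step1 1 (by omega)] at h2
    exact absurd h2 (h.notMem (by omega) (by omega) (by omega))
  · have := h.step2 0 (by omega)
    rw [e, this] at h2
    exact absurd h2 (h.notMem (by omega) (by omega) (by omega))
  · exact e.symm

theorem G1 (h : PathData s α β G r) (h' : PathData s α' β' G' r) : G 1 = G' 1 := by
  have := h.step1 0 (by omega)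
  have h2 := h'.step1 0 (by omega)
  rw [← h.G0 h', this] at h2
  exact h2

theorem Gv (h : PathData s α β G r) (h' : PathData s α' β' G' r) :
    G (α + 2) = G' (α' + 2) := by
  have hα := h'.hα
  have h1 : G' (α' + 2) ∈ s := by rw [h'.mem]; simp
  rcases h.mem.1 h1 with e | e | e
  · rw [h.G1 h'] at e
    have := h'.inj _ (by omega) _ (by omega) e; omega
  · exact e.symm
  · rw [h.G0 h'] at e
    have := h'.inj _ (by omega) _ (by omega) e; omega

theorem agree1 (h : PathData s α β G r) (h' : PathData s α' β' G' r) (i : ℕ)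
    (hi : i ≤ α + 1) (hi' : i ≤ α' + 1) : G i = G' i := by
  induction i with
  | zero => exact h.G0 h'
  | succ i ih =>
    rw [← h.step1 i (by omega), ← h'.step1 i (by omega), ih (by omega) (by omega)]

theorem agree2 (h : PathData s α β G r) (h' : PathData s α' β' G' r) (i : ℕ)
    (hi : i ≤ β) (hi' : i ≤ β') : G (α + 2 + i) = G' (α' + 2 + i) := by
  induction i with
  | zero => exact h.Gv h'
  | succ i ih =>
    rw [← h.step2 i (by omega), ← h'.step2 i (by omega), ih (by omega) (by omega)]

theorem alpha_le (h : PathData s α β G r) (h' : PathData s α' β' G' r) : α' ≤ α := by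
  by_contra hlt
  have e := h.last1
  rw [h.agree1 h' _ le_rfl (by omega), h'.step1 _ (by omega)] at e
  exact h'.notMem (by omega) (by omega) (by omega) e

theorem beta_le (h : PathData s α β G r) (h' : PathData s α' β' G' r) : β' ≤ β := by
  by_contra hlt
  have e := h.last2
  rw [show α + β + 2 = α + 2 + β by omega, h.agree2 h' _ le_rfl (by omega),
    h'.step2 _ (by omega)] at e
  exact h'.notMem (by omega) (by omega) (by omega) e

theorem agree (h : PathData s α β G r) (h' : PathData s α β G' r) (i : ℕ)
    (hi : i < α + β + 3) : G i = G' i := by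
  by_cases h1 : i ≤ α + 1
  · exact h.agree1 h' i h1 h1
  · have := h.agree2 h' (i - (α + 2)) (by omega) (by omega)
    rwa [show α + 2 + (i - (α + 2)) = i by omega] at this

theorem swap (h : PathData s α β G r) :
    PathData s α β G (Equiv.swap (G (α + 2)) (G 0) * r) := by
  have hα := h.hα
  have hβ := h.hβ
  have ne : ∀ i j, i < α + β + 3 → j < α + β + 3 → i ≠ j → G i ≠ G j :=
    fun i j hi hj hij e => hij (h.inj i hi j hj e)
  refine ⟨hα, hβ, h.hs, h.inj, ?_, ?_, ?_⟩
  · intro i hi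
    rw [Equiv.Perm.mul_apply, h.step1 i hi, Equiv.swap_apply_of_ne_of_ne]
    · exact ne _ _ (by omega) (by omega) (by omega)
    · exact ne _ _ (by omega) (by omega) (by omega)
  · intro i hi
    rw [Equiv.Perm.mul_apply, h.step2 i hi, Equiv.swap_apply_of_ne_of_ne]
    · exact ne _ _ (by omega) (by omega) (by omega)
    · exact ne _ _ (by omega) (by omega) (by omega)
  · simp only [Equiv.Perm.mul_apply]
    rcases h.last with ⟨e1, e2⟩ | ⟨e1, e2⟩
    · right; simp [e1, e2]
    · left; simp [e1, e2]

end PathData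

/-- A permutation agreeing with `g` on the first `k` points, depending only on those values. -/
noncomputable def repPerm {n : ℕ} (hn : 7 ≤ n) (k : ℕ) (g : Equiv.Perm (Fin n)) :
    Equiv.Perm (Fin n) :=
  Classical.epsilon (fun h : Equiv.Perm (Fin n) => ∀ i < k, h (ptIdx hn i) = g (ptIdx hn i))

theorem repPerm_spec {n : ℕ} (hn : 7 ≤ n) (k : ℕ) (g : Equiv.Perm (Fin n)) :
    ∀ i < k, repPerm hn k g (ptIdx hn i) = g (ptIdx hn i) :=
  Classical.epsilon_spec (p := fun h : Equiv.Perm (Fin n) =>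
    ∀ i < k, h (ptIdx hn i) = g (ptIdx hn i)) ⟨g, fun _ _ => rfl⟩

theorem repPerm_congr {n : ℕ} (hn : 7 ≤ n) (k : ℕ) (g g' : Equiv.Perm (Fin n))
    (h : ∀ i < k, g (ptIdx hn i) = g' (ptIdx hn i)) : repPerm hn k g = repPerm hn k g' := by
  unfold repPerm
  congr 1
  funext f
  apply propext
  exact forall₂_congr fun i hi => by rw [h i hi]

/-- chosen rotation of the first `k` points -/
noncomputable def rotPerm {n : ℕ} (hn : 7 ≤ n) (k : ℕ) : Equiv.Perm (Fin n) :=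
  if h : 7 ≤ k ∧ k ≤ n then (exists_rot hn k h.1 h.2).choose else 1

theorem rotPerm_spec {n : ℕ} (hn : 7 ≤ n) (k : ℕ) (hk : 7 ≤ k) (hkn : k ≤ n) :
    (∀ i, i + 1 < k → rotPerm hn k (ptIdx hn i) = ptIdx hn (i + 1)) ∧
      rotPerm hn k (ptIdx hn (k - 1)) = ptIdx hn 0 := by
  unfold rotPerm
  rw [dif_pos ⟨hk, hkn⟩]
  exact (exists_rot hn k hk hkn).choose_spec

/-- the base element -/
noncomputable def baseElt {n : ℕ} (hn : 7 ≤ n) (k : ℕ) (g : Equiv.Perm (Fin n)) :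
    Equiv.Perm (Fin n) := g * rotPerm hn k * (repPerm hn k g)⁻¹

theorem baseElt_apply {n : ℕ} (hn : 7 ≤ n) (k : ℕ) (g : Equiv.Perm (Fin n)) (i : ℕ) (hi : i < k) :
    baseElt hn k g (g (ptIdx hn i)) = g (rotPerm hn k (ptIdx hn i)) := by
  rw [← repPerm_spec hn k g i hi]
  simp [baseElt]

/-- the three positions for the points of the support -/
def posSet {n : ℕ} (hn : 7 ≤ n) (α : ℕ) : Finset (Fin n) :=
  {ptIdx hn 1, ptIdx hn (α + 2), ptIdx hn 0}

theorem baseElt_last {n : ℕ} (hn : 7 ≤ n) {α β : ℕ} (hα : 2 ≤ α) (hβ : 2 ≤ β)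
    (hk : α + β + 3 ≤ n) (g : Equiv.Perm (Fin n)) :
    baseElt hn (α + β + 3) g (g (ptIdx hn (α + β + 2))) = g (ptIdx hn 0) := by
  rw [baseElt_apply _ _ _ _ (by omega)]
  have := (rotPerm_spec hn (α + β + 3) (by omega) hk).2
  rw [show α + β + 3 - 1 = α + β + 2 by omega] at this
  rw [this]

theorem baseElt_pathData {n : ℕ} (hn : 7 ≤ n) {α β : ℕ} (hα : 2 ≤ α) (hβ : 2 ≤ β)
    (hk : α + β + 3 ≤ n) (g : Equiv.Perm (Fin n)) (s : Finset (Fin n))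
    (hg : (posSet hn α).image g = s) :
    PathData s α β (fun i => g (ptIdx hn i)) (baseElt hn (α + β + 3) g) := by
  obtain ⟨h1, h2⟩ := rotPerm_spec hn (α + β + 3) (by omega) hk
  refine ⟨hα, hβ, ?_, ?_, ?_, ?_, Or.inr ⟨?_, baseElt_last hn hα hβ hk g⟩⟩
  · rw [← hg]; simp [posSet, Finset.image_insert]
  · intro i hi j hj e
    exact ptIdx_inj hn (by omega) (by omega) (g.injective e)
  · intro i hi
    rw [baseElt_apply _ _ _ _ (by omega), h1 _ (by omega)]
  · intro i hi
    rw [baseElt_apply _ _ _ _ (by omega), h1 _ (by omega), add_assoc]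
  · rw [baseElt_apply _ _ _ _ (by omega), h1 _ (by omega)]

/-- the element of sign `σ` attached to the data -/
noncomputable def signElt {n : ℕ} (hn : 7 ≤ n) (σ : ℤˣ) (α β : ℕ) (g : Equiv.Perm (Fin n)) :
    Equiv.Perm (Fin n) :=
  if Equiv.Perm.sign (baseElt hn (α + β + 3) g) = σ then baseElt hn (α + β + 3) g
  else Equiv.swap (g (ptIdx hn (α + 2))) (g (ptIdx hn 0)) * baseElt hn (α + β + 3) g

theorem signElt_pathData {n : ℕ} (hn : 7 ≤ n) (σ : ℤˣ) {α β : ℕ} (hα : 2 ≤ α) (hβ : 2 ≤ β)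
    (hk : α + β + 3 ≤ n) (g : Equiv.Perm (Fin n)) (s : Finset (Fin n))
    (hg : (posSet hn α).image g = s) :
    PathData s α β (fun i => g (ptIdx hn i)) (signElt hn σ α β g) := by
  have := baseElt_pathData hn hα hβ hk g s hg
  unfold signElt
  split_ifs
  · exact this
  · exact this.swap

theorem vw_ne {n : ℕ} (hn : 7 ≤ n) {α : ℕ} (hk : α + 2 < n) (g : Equiv.Perm (Fin n)) :
    g (ptIdx hn (α + 2)) ≠ g (ptIdx hn 0) := by
  intro e
  have := ptIdx_inj hn (by omega) (by omega) (g.injective e)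
  omega

theorem signElt_sign {n : ℕ} (hn : 7 ≤ n) (σ : ℤˣ) {α β : ℕ}
    (hk : α + β + 3 ≤ n) (g : Equiv.Perm (Fin n)) :
    Equiv.Perm.sign (signElt hn σ α β g) = σ := by
  unfold signElt
  split_ifs with h
  · exact h
  · rw [Equiv.Perm.sign_mul, Equiv.Perm.sign_swap (vw_ne hn (by omega) g)]
    rcases Int.units_eq_one_or (Equiv.Perm.sign (baseElt hn (α + β + 3) g)) with e | e <;>
    rcases Int.units_eq_one_or σ with e' | e' <;> simp_all

theorem signElt_inj {n : ℕ} (hn : 7 ≤ n) (σ : ℤˣ) {α β α' β' : ℕ} (hα : 2 ≤ α) (hβ : 2 ≤ β)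
    (hk : α + β + 3 ≤ n) (hα' : 2 ≤ α') (hβ' : 2 ≤ β')
    (hk' : α' + β' + 3 ≤ n) (g g' : Equiv.Perm (Fin n)) (s : Finset (Fin n))
    (hg : (posSet hn α).image g = s) (hg' : (posSet hn α').image g' = s)
    (he : signElt hn σ α β g = signElt hn σ α' β' g') : α = α' ∧ β = β' ∧ g = g' := by
  have h := signElt_pathData hn σ hα hβ hk g s hg
  have h' := signElt_pathData hn σ hα' hβ' hk' g' s hg'
  rw [← he] at h'
  obtain rfl : α = α' := le_antisymm (h'.alpha_le h) (h.alpha_le h')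
  obtain rfl : β = β' := le_antisymm (h'.beta_le h) (h.beta_le h')
  refine ⟨rfl, rfl, ?_⟩
  have ag : ∀ i < α + β + 3, g (ptIdx hn i) = g' (ptIdx hn i) := fun i hi => h.agree h' i hi
  have hrep := repPerm_congr hn _ g g' ag
  have hne := vw_ne hn (show α + 2 < n by omega) g'
  have l := baseElt_last hn hα hβ hk g
  have l' := baseElt_last hn hα hβ hk g'
  rw [ag _ (by omega), ag _ (by omega)] at l
  have hb : baseElt hn (α + β + 3) g = baseElt hn (α + β + 3) g' := by
    unfold signElt at he
    rw [ag 0 (by omega), ag (α + 2) (by omega)] at he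
    split_ifs at he with c1 c2 c2
    · exact he
    · have := congrArg (fun p : Equiv.Perm (Fin n) => p (g' (ptIdx hn (α + β + 2)))) he
      simp only [Equiv.Perm.mul_apply, l, l', Equiv.swap_apply_right] at this
      exact absurd this.symm hne
    · have := congrArg (fun p : Equiv.Perm (Fin n) => p (g' (ptIdx hn (α + β + 2)))) he
      simp only [Equiv.Perm.mul_apply, l, l', Equiv.swap_apply_right] at this
      exact absurd this hne
    · exact mul_left_cancel he
  unfold baseElt at hb
  rw [hrep] at hb
  exact mul_right_cancel (mul_right_cancel hb)

theorem card_image_eq {n : ℕ} (X Y : Finset (Fin n)) (hX : X.card = 3) (hY : Y.card = 3) :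
    (Finset.univ.filter (fun g : Equiv.Perm (Fin n) => X.image g = Y)).card * n.choose 3
      = n.factorial := by
  have key : ∀ T ∈ Finset.powersetCard 3 (Finset.univ : Finset (Fin n)),
      (Finset.univ.filter (fun g : Equiv.Perm (Fin n) => X.image g = T)).card =
      (Finset.univ.filter (fun g : Equiv.Perm (Fin n) => X.image g = Y)).card := by
    intro T hT
    have hT3 : T.card = 3 := (Finset.mem_powersetCard.1 hT).2
    let e : {x // x ∈ T} ≃ {x // x ∈ Y} := Finset.equivOfCardEq (by rw [hT3, hY])
    have he : T.image (e.extendSubtype) = Y := by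
      apply Finset.eq_of_subset_of_card_le
      · intro y hy
        obtain ⟨x, hx, rfl⟩ := Finset.mem_image.1 hy
        exact e.extendSubtype_mem x hx
      · rw [Finset.card_image_of_injective _ (Equiv.injective _), hT3, hY]
    apply Finset.card_bij (fun g _ => e.extendSubtype * g)
    · intro g hg
      simp only [Finset.mem_filter, Finset.mem_univ, true_and] at hg ⊢
      refine Eq.trans ?_ he
      rw [Equiv.Perm.coe_mul, ← Finset.image_image, hg]
    · intro a _ b _ h; exact mul_left_cancel h
    · intro g hg
      simp only [Finset.mem_filter, Finset.mem_univ, true_and] at hg ⊢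
      refine ⟨e.extendSubtype⁻¹ * g, ?_, by simp⟩
      apply Finset.image_injective (Equiv.injective e.extendSubtype)
      refine Eq.trans ?_ (hg.trans he.symm)
      rw [Finset.image_image]
      congr 1
      funext x
      simp
  have h := Finset.card_eq_sum_card_fiberwise (s := (Finset.univ : Finset (Equiv.Perm (Fin n))))
    (t := Finset.powersetCard 3 (Finset.univ : Finset (Fin n))) (f := fun g : Equiv.Perm (Fin n) => X.image g)
    (by
      intro g _
      simp only [Finset.mem_coe, Finset.mem_powersetCard]
      exact ⟨Finset.subset_univ _,
        by rw [Finset.card_image_of_injective _ (Equiv.injective _), hX]⟩)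
  rw [Finset.sum_congr rfl key, Finset.sum_const, Finset.card_powersetCard] at h
  simp only [Finset.card_univ, Fintype.card_perm, Fintype.card_fin, smul_eq_mul] at h
  rw [h, mul_comm]

/-- index pairs `(α - 2, β - 2)` -/
def pairSet (n : ℕ) : Finset (Σ _ : ℕ, ℕ) :=
  (Finset.range (n - 6)).sigma (fun i => Finset.range (n - 6 - i))

theorem pairSet_card (n : ℕ) (hn : 7 ≤ n) : (pairSet n).card * 2 = (n - 5) * (n - 6) := by
  unfold pairSet
  rw [Finset.card_sigma]
  simp only [Finset.card_range]
  obtain ⟨m, rfl⟩ : ∃ m, n = m + 7 := ⟨n - 7, by omega⟩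
  have : ∀ k : ℕ, (∑ i ∈ Finset.range k, (k - i)) * 2 = (k + 1) * k := by
    intro k
    induction k with
    | zero => simp
    | succ k ih =>
      rw [Finset.sum_range_succ']
      simp only [Nat.add_sub_add_right, Nat.sub_zero]
      rw [add_mul, ih]; ring
  have h := this (m + 7 - 6)
  rw [h]
  congr 1

theorem posSet_card {n : ℕ} (hn : 7 ≤ n) {α : ℕ} (hα : 2 ≤ α) (hk : α + 2 < n) :
    (posSet hn α).card = 3 := by
  rw [Finset.card_eq_three]
  refine ⟨_, _, _, ?_, ?_, ?_, rfl⟩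
  all_goals
    intro e
    have := ptIdx_inj hn (by omega) (by omega) e
    omega

/-- pre-bolstering for some admissible `k` -/
def PreB {n : ℕ} (c r : Equiv.Perm (Fin n)) : Prop := ∃ k, 7 ≤ k ∧ k ≤ n ∧ IsKPreBolstering k c r

theorem count_sign {n : ℕ} (hn : 7 ≤ n) (c : Equiv.Perm (Fin n)) (hc : c.IsThreeCycle) (σ : ℤˣ) :
    n.factorial ≤ 5 * n * (Finset.univ.filter (fun r : Equiv.Perm (Fin n) =>
      Equiv.Perm.sign r = σ ∧ PreB c r)).card := by
  set M := (Finset.univ.filter (fun r : Equiv.Perm (Fin n) =>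
      Equiv.Perm.sign r = σ ∧ PreB c r)).card with hM
  have hs : c.support.card = 3 := hc.card_support
  let D : Finset (Σ _ : (Σ _ : ℕ, ℕ), Equiv.Perm (Fin n)) :=
    (pairSet n).sigma (fun p => Finset.univ.filter
      (fun g : Equiv.Perm (Fin n) => (posSet hn (p.1 + 2)).image g = c.support))
  have hmem : ∀ d ∈ D, d.1.1 + d.1.2 + 7 ≤ n ∧
      (posSet hn (d.1.1 + 2)).image d.2 = c.support := by
    intro d hd
    simp only [D, pairSet, Finset.mem_sigma, Finset.mem_range, Finset.mem_filter,
      Finset.mem_univ, true_and] at hd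
    exact ⟨by omega, hd.2⟩
  have hDM : D.card ≤ M := by
    apply Finset.card_le_card_of_injOn (fun d => signElt hn σ (d.1.1 + 2) (d.1.2 + 2) d.2)
    · intro d hd
      obtain ⟨h1, h2⟩ := hmem d hd
      simp only [Finset.coe_filter, Finset.mem_univ, true_and, Set.mem_ofPred_eq]
      refine ⟨signElt_sign hn σ (by omega) _, _, ?_, ?_, (signElt_pathData hn σ
        (by omega) (by omega) (by omega) d.2 c.support h2).toPre⟩ <;> omega
    · intro d hd d' hd' e
      obtain ⟨h1, h2⟩ := hmem d hd
      obtain ⟨h1', h2'⟩ := hmem d' hd'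
      obtain ⟨⟨x, y⟩, g⟩ := d
      obtain ⟨⟨x', y'⟩, g'⟩ := d'
      simp only at h1 h2 h1' h2' e
      obtain ⟨e1, e2, e3⟩ := signElt_inj hn σ (by omega) (by omega) (by omega) (by omega)
        (by omega) (by omega) g g' c.support h2 h2' e
      obtain rfl : x = x' := by omega
      obtain rfl : y = y' := by omega
      rw [e3]
  have hDc : D.card * n.choose 3 = (pairSet n).card * n.factorial := by
    rw [Finset.card_sigma, Finset.sum_mul, Finset.sum_congr rfl (g := fun _ => n.factorial)]
    · simp
    · intro p hp
      simp only [pairSet, Finset.mem_sigma, Finset.mem_range] at hp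
      exact card_image_eq _ _ (posSet_card hn (by omega) (by omega)) hs
  have hp := pairSet_card n hn
  have hch : n.choose 3 * 6 = n * (n - 1) * (n - 2) := by
    have := Nat.descFactorial_eq_factorial_mul_choose n 3
    simp [Nat.descFactorial, Nat.factorial] at this
    linarith
  have hpos : 0 < n.choose 3 := Nat.choose_pos (by omega)
  have h3 : n.choose 3 ≤ 5 * n * (pairSet n).card := by
    obtain ⟨m, rfl⟩ : ∃ m, n = m + 7 := ⟨n - 7, by omega⟩
    have e1 : m + 7 - 5 = m + 2 := by omega
    have e2 : m + 7 - 6 = m + 1 := by omega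
    have e3 : m + 7 - 1 = m + 6 := by omega
    have e4 : m + 7 - 2 = m + 5 := by omega
    rw [e1, e2] at hp
    rw [e3, e4] at hch
    have : (m + 7) * (m + 6) * (m + 5) ≤ 15 * (m + 7) * ((m + 2) * (m + 1)) := by
      nlinarith [Nat.zero_le m, Nat.zero_le (m*m), Nat.zero_le (m*m*m)]
    rw [← hp] at this
    nlinarith
  apply Nat.le_of_mul_le_mul_right _ hpos
  calc n.factorial * n.choose 3 ≤ n.factorial * (5 * n * (pairSet n).card) := by gcongr
    _ = 5 * n * ((pairSet n).card * n.factorial) := by ring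
    _ = 5 * n * (D.card * n.choose 3) := by rw [hDc]
    _ ≤ 5 * n * (M * n.choose 3) := by gcongr
    _ = _ := by ring

theorem count_H {n : ℕ} (hn : 7 ≤ n)
    (H : Subgroup (Equiv.Perm (Fin n))) (hH : H = ⊤ ∨ H = alternatingGroup (Fin n))
    (c : Equiv.Perm (Fin n)) (hc : c.IsThreeCycle) :
    2 * Fintype.card H ≤ 5 * n *
      (Finset.univ.filter (fun r : H => PreB c (r : Equiv.Perm (Fin n)))).card := by
  have h1 := count_sign hn c hc 1
  have h2 := count_sign hn c hc (-1)
  have hcard : (Finset.univ.filter (fun r : H => PreB c (r : Equiv.Perm (Fin n)))).card =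
      (Finset.univ.filter (fun r : Equiv.Perm (Fin n) => r ∈ H ∧ PreB c r)).card := by
    apply Finset.card_bij (fun (r : H) _ => (r : Equiv.Perm (Fin n)))
    · intro r hr
      simp only [Finset.mem_filter, Finset.mem_univ, true_and] at hr ⊢
      exact ⟨r.2, hr⟩
    · intro a _ b _ h; exact Subtype.ext h
    · intro r hr
      simp only [Finset.mem_filter, Finset.mem_univ, true_and] at hr
      exact ⟨⟨r, hr.1⟩, by simpa using hr.2, rfl⟩
  rw [hcard]
  rcases hH with rfl | rfl
  · have e : (Finset.univ.filter (fun r : Equiv.Perm (Fin n) =>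
        r ∈ (⊤ : Subgroup (Equiv.Perm (Fin n))) ∧ PreB c r)) =
        (Finset.univ.filter (fun r : Equiv.Perm (Fin n) =>
          Equiv.Perm.sign r = 1 ∧ PreB c r)) ∪ (Finset.univ.filter (fun r : Equiv.Perm (Fin n) =>
          Equiv.Perm.sign r = -1 ∧ PreB c r)) := by
      ext r
      simp only [Finset.mem_filter, Finset.mem_univ, true_and, Finset.mem_union, Subgroup.mem_top]
      rcases Int.units_eq_one_or (Equiv.Perm.sign r) with e | e <;> simp [e]
    have hd : Disjoint (Finset.univ.filter (fun r : Equiv.Perm (Fin n) =>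
          Equiv.Perm.sign r = 1 ∧ PreB c r)) (Finset.univ.filter (fun r : Equiv.Perm (Fin n) =>
          Equiv.Perm.sign r = -1 ∧ PreB c r)) := by
      rw [Finset.disjoint_left]
      intro r hr hr'
      simp only [Finset.mem_filter, Finset.mem_univ, true_and] at hr hr'
      rw [hr.1] at hr'
      exact absurd hr'.1 (by decide)
    rw [e, Finset.card_union_of_disjoint hd, mul_add]
    have : Fintype.card (⊤ : Subgroup (Equiv.Perm (Fin n))) = n.factorial := by
      rw [← Nat.card_eq_fintype_card, Subgroup.card_top, Nat.card_eq_fintype_card,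
        Fintype.card_perm, Fintype.card_fin]
    omega
  · have : Nontrivial (Fin n) := Fin.nontrivial_iff_two_le.2 (by omega)
    have : 2 * Fintype.card (alternatingGroup (Fin n)) = n.factorial := by
      have := two_mul_nat_card_alternatingGroup (α := Fin n)
      rw [Nat.card_eq_fintype_card, Nat.card_eq_fintype_card, Fintype.card_perm,
        Fintype.card_fin] at this
      convert this
    simp only [Equiv.Perm.mem_alternatingGroup]
    refine le_trans (le_of_eq ?_) h1
    convert this
    exact Equiv.Perm.mem_alternatingGroup.symm

/-- Chernoff-type counting bound. -/
theorem chernoff_count {A : Type*} [Fintype A] (P : A → Prop) (S R : ℕ) (t : ℝ)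
    (ht0 : 0 < t) (ht1 : t ≤ 1) :
    ((Finset.univ.filter (fun f : Fin S → A =>
      ¬ R ≤ (Finset.univ.filter (fun i : Fin S => P (f i))).card)).card : ℝ) * t ^ R ≤
    ((Fintype.card A : ℝ) - (1 - t) * ((Finset.univ.filter (fun a : A => P a)).card : ℝ)) ^ S := by
  have h1 : ((Fintype.card A : ℝ) - (1 - t) * ((Finset.univ.filter (fun a : A => P a)).card : ℝ))
      = ∑ a : A, (if P a then t else 1) := by
    have : ∀ a : A, (if P a then t else 1) = 1 - (1 - t) * (if P a then 1 else 0) := by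
      intro a; split_ifs <;> ring
    simp only [this]
    rw [Finset.sum_sub_distrib, ← Finset.mul_sum]
    simp
  rw [h1]
  have h2 : (∑ a : A, (if P a then t else 1)) ^ S =
      ∑ f : Fin S → A, t ^ (Finset.univ.filter (fun i : Fin S => P (f i))).card := by
    have := Finset.sum_pow' (Finset.univ : Finset A) (fun a => if P a then t else (1 : ℝ)) S
    rw [this]
    simp only [Fintype.piFinset_univ]
    refine Finset.sum_congr rfl fun f _ => ?_
    rw [Finset.prod_ite]
    simp
  rw [h2, ← nsmul_eq_mul, ← Finset.sum_const]
  calc _ ≤ ∑ f ∈ (Finset.univ.filter (fun f : Fin S → A =>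
      ¬ R ≤ (Finset.univ.filter (fun i : Fin S => P (f i))).card)),
        t ^ (Finset.univ.filter (fun i : Fin S => P (f i))).card := by
        refine Finset.sum_le_sum fun f hf => ?_
        simp only [Finset.mem_filter, Finset.mem_univ, true_and, not_le] at hf
        exact pow_le_pow_of_le_one ht0.le ht1 hf.le
    _ ≤ _ := Finset.sum_le_sum_of_subset_of_nonneg (Finset.filter_subset _ _)
        (fun _ _ _ => by positivity)

theorem log_bound : Real.log (25 / 9 : ℝ) ≤ 6 / 5 := by
  have h : (25 / 9 : ℝ) = (5 / 3) ^ 2 := by norm_num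
  rw [h, Real.log_pow]
  have : Real.log (5 / 3 : ℝ) ≤ 3 / 5 := by
    rw [Real.log_le_iff_le_exp (by norm_num)]
    have := Real.quadratic_le_exp_of_nonneg (x := 3 / 5) (by norm_num)
    linarith
  push_cast
  linarith

/-- Let `n ≥ 7`, `G ∈ {Alt_n, Sym_n}`, `c ∈ G` a `3`-cycle, `0 < ε < 1`,
`1/2 < α ≤ 4/5`, `R = ⌈(1/2)·log_α ε⌉` and
`S = ⌈5n·max((25/18)·R, (5/4)⁴·log ε⁻¹)⌉`.  Among all `S`-tuples of elements of `G` (each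
tuple equally likely, modelling independent uniform random elements), the proportion of
tuples having at least `R` entries that are `k`-pre-bolstering with respect to `c` for
some `7 ≤ k ≤ n` is at least `1 − ε`. -/
theorem enough_preBolstering_elements (n : ℕ) (hn : 7 ≤ n)
    (H : Subgroup (Equiv.Perm (Fin n))) (hH : H = ⊤ ∨ H = alternatingGroup (Fin n))
    (c : Equiv.Perm (Fin n)) (hcH : c ∈ H) (hc : c.IsThreeCycle)
    (ε α : ℝ) (hε0 : 0 < ε) (hε1 : ε < 1) (hα1 : 1 / 2 < α) (hα2 : α ≤ 4 / 5)
    (R S : ℕ) (hR : R = ⌈(1 / 2) * (Real.log ε / Real.log α)⌉₊)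
    (hS : S = ⌈5 * (n : ℝ) * max ((25 / 18) * (R : ℝ)) ((5 / 4) ^ 4 * Real.log ε⁻¹)⌉₊) :
    1 - ε ≤
      ((Finset.univ.filter (fun f : Fin S → H =>
          R ≤ (Finset.univ.filter (fun i : Fin S => ∃ k, 7 ≤ k ∧ k ≤ n ∧
              IsKPreBolstering k c ((f i : Equiv.Perm (Fin n))))).card)).card : ℝ) /
        (Fintype.card (Fin S → H) : ℝ) := by
  have hM := count_H hn H hH c hc
  have hch := chernoff_count (A := H) (fun r : H => PreB c (r : Equiv.Perm (Fin n))) S R (9 / 25)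
    (by norm_num) (by norm_num)
  have hadd := Finset.card_filter_add_card_filter_not
    (s := (Finset.univ : Finset (Fin S → H))) (fun f : Fin S → H =>
          R ≤ (Finset.univ.filter (fun i : Fin S => PreB c ((f i : Equiv.Perm (Fin n))))).card)
  set M := (Finset.univ.filter (fun r : H => PreB c (r : Equiv.Perm (Fin n)))).card with hMdef
  set B := (Finset.univ.filter (fun f : Fin S → H =>
    ¬ R ≤ (Finset.univ.filter (fun i : Fin S => PreB c ((f i : Equiv.Perm (Fin n))))).card)).card
    with hB
  change 1 - ε ≤ ((Finset.univ.filter (fun f : Fin S → H =>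
          R ≤ (Finset.univ.filter (fun i : Fin S =>
            PreB c ((f i : Equiv.Perm (Fin n))))).card)).card : ℝ) / _
  set Gd := (Finset.univ.filter (fun f : Fin S → H =>
          R ≤ (Finset.univ.filter (fun i : Fin S =>
            PreB c ((f i : Equiv.Perm (Fin n))))).card)).card with hGd
  have hN : (0 : ℝ) < (Fintype.card H : ℝ) := by exact_mod_cast Fintype.card_pos
  have hT : (Fintype.card (Fin S → H) : ℝ) = (Fintype.card H : ℝ) ^ S := by
    simp [Fintype.card_fun]
  have hadd' : (Gd : ℝ) + B = (Fintype.card H : ℝ) ^ S := by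
    rw [← hT, ← Finset.card_univ]; exact_mod_cast hadd
  set N : ℝ := (Fintype.card H : ℝ) with hNdef
  have hn0 : (0 : ℝ) < n := by exact_mod_cast (by omega : 0 < n)
  have hMr : 2 * N ≤ 5 * n * (M : ℝ) := by rw [hNdef]; exact_mod_cast hM
  have hMN : (M : ℝ) ≤ N := by
    rw [hNdef]; exact_mod_cast Finset.card_le_univ _
  have hSr : 5 * (n : ℝ) * max ((25 / 18) * (R : ℝ)) ((5 / 4) ^ 4 * Real.log ε⁻¹) ≤ S := by
    rw [hS]; exact Nat.le_ceil _
  have hlog : 0 < Real.log ε⁻¹ := Real.log_pos ((one_lt_inv₀ hε0).2 hε1)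
  -- the mean
  obtain ⟨μ, hμ⟩ : ∃ μ : ℝ, μ = 2 / (5 * n) * S := ⟨_, rfl⟩
  have hSμ : (S : ℝ) = 5 * n * (μ / 2) := by rw [hμ]; field_simp
  have hmax : max ((25 / 18) * (R : ℝ)) ((5 / 4) ^ 4 * Real.log ε⁻¹) ≤ μ / 2 := by
    rw [hSμ] at hSr
    exact le_of_mul_le_mul_left hSr (by positivity)
  have hμR : (R : ℝ) ≤ 9 / 25 * μ := by
    have := (le_max_left _ _).trans hmax
    linarith
  have hμε : (5 / 4) ^ 4 * Real.log ε⁻¹ ≤ μ / 2 := (le_max_right _ _).trans hmax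
  -- power bound
  have hbase : N - (1 - 9 / 25) * M ≤ N * Real.exp (-(16 / 25 * (2 / (5 * n)))) := by
    have h1 : 2 / (5 * n) * N ≤ M := by
      rw [div_mul_eq_mul_div, div_le_iff₀ (by positivity)]; linarith
    have h2 := Real.add_one_le_exp (-(16 / 25 * (2 / (5 * (n : ℝ)))))
    calc N - (1 - 9 / 25) * M ≤ N * (-(16 / 25 * (2 / (5 * (n : ℝ)))) + 1) := by linarith
      _ ≤ _ := by gcongr
  have hpow : (N - (1 - 9 / 25) * M) ^ S ≤ N ^ S * Real.exp (-(16 / 25 * μ)) := by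
    calc _ ≤ (N * Real.exp (-(16 / 25 * (2 / (5 * n))))) ^ S := by
          apply pow_le_pow_left₀ _ hbase
          linarith [(Nat.cast_nonneg M : (0 : ℝ) ≤ M)]
      _ = _ := by
          rw [mul_pow, ← Real.exp_nat_mul, hμ]; congr 2; ring
  have ht : ((9 / 25 : ℝ) ^ R)⁻¹ ≤ Real.exp (54 / 125 * μ) := by
    have : ((9 / 25 : ℝ) ^ R)⁻¹ = Real.exp (R * Real.log (25 / 9)) := by
      rw [Real.exp_nat_mul, Real.exp_log (by norm_num), ← inv_pow]; norm_num
    rw [this]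
    apply Real.exp_le_exp.2
    have := log_bound
    have h0 : (0 : ℝ) ≤ R := Nat.cast_nonneg _
    nlinarith
  have hBle : (B : ℝ) ≤ ε * N ^ S := by
    have h1 : (B : ℝ) ≤ (N ^ S * Real.exp (-(16 / 25 * μ))) * ((9 / 25 : ℝ) ^ R)⁻¹ := by
      rw [← div_eq_mul_inv, le_div_iff₀ (by positivity)]
      exact hch.trans hpow
    have h2 : Real.exp (-(16 / 25 * μ)) * Real.exp (54 / 125 * μ) ≤ ε := by
      rw [← Real.exp_add]
      rw [← Real.le_log_iff_exp_le hε0]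
      rw [Real.log_inv] at hμε hlog
      linarith
    calc (B : ℝ) ≤ (N ^ S * Real.exp (-(16 / 25 * μ))) * ((9 / 25 : ℝ) ^ R)⁻¹ := h1
      _ ≤ (N ^ S * Real.exp (-(16 / 25 * μ))) * Real.exp (54 / 125 * μ) := by gcongr
      _ = N ^ S * (Real.exp (-(16 / 25 * μ)) * Real.exp (54 / 125 * μ)) := by ring
      _ ≤ N ^ S * ε := by gcongr
      _ = _ := by ring
  rw [hT, le_div_iff₀ (by positivity)]
  linarith
end
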